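/- arXiv:2603.09008 — 3 statements merged into one kernel-verified Lean document; each statement's English description precedes it below -/
import Mathlib

section
/- Let (r_n) be a sequence of positive integers such that r_n ≥ (n log n)/2 + c_n n for some sequence c_n → ∞. For each n, let D^{r_n}_n be the number of descents of the random permutation of [n] obtained by performing r_n iterated random-to-top shuffles starting from the identity. Then (D^{r_n}_n − n/2)/√n converges in distribution, as n → ∞, to a centered normal random variable with variance 1/12. -/
open MeasureTheory ProbabilityTheory Filter Finset Topology
open scoped NNReal

/-- Move card `c` to the top (position `0`) of the deck `π`
(where `π i` is the card in position `i`). -/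
def moveToTop {n : ℕ} (c : Fin n) (π : Equiv.Perm (Fin n)) : Equiv.Perm (Fin n) :=
  π * ((π⁻¹ c).cycleRange)⁻¹

/-- The permutation (position `i` ↦ card in position `i`) obtained after performing
iterated random-to-top moves with selected cards `s 0, s 1, …`, starting from the
identity deck `(1, 2, …, n)`. -/
def rttPerm (n r : ℕ) (s : Fin r → Fin n) : Equiv.Perm (Fin n) :=
  (List.ofFn s).foldl (fun π c => moveToTop c π) 1

/-- Number of fixed points of a permutation. -/
def fixedPointCount {n : ℕ} (π : Equiv.Perm (Fin n)) : ℕ :=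
  (Finset.univ.filter fun i => π i = i).card

/-- Number of descents of a permutation. -/
def descentCount {n : ℕ} (π : Equiv.Perm (Fin n)) : ℕ :=
  (Finset.univ.filter fun p : Fin n × Fin n =>
    (p.1 : ℕ) + 1 = (p.2 : ℕ) ∧ π p.2 < π p.1).card

/-- Number of inversions of a permutation. -/
def inversionCount {n : ℕ} (π : Equiv.Perm (Fin n)) : ℕ :=
  (Finset.univ.filter fun p : Fin n × Fin n => p.1 < p.2 ∧ π p.2 < π p.1).card

/-- The number of distinct values among `s 0, …, s (r-1)` (the occupancy count `K^r_n`). -/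
def distinctCount (n r : ℕ) (s : Fin r → Fin n) : ℕ :=
  (Finset.univ.image s).card

/-- Probability of the event `p` under the uniform distribution on the finite type `α`. -/
noncomputable def unifProb {α : Type*} [Fintype α] (p : α → Prop) : ℝ :=
  (Nat.card {x : α // p x} : ℝ) / (Fintype.card α : ℝ)

/-- Expectation of `f` under the uniform distribution on the finite type `α`. -/
noncomputable def unifExpect {α : Type*} [Fintype α] (f : α → ℝ) : ℝ :=
  (∑ x, f x) / (Fintype.card α : ℝ)

/-- Variance of `f` under the uniform distribution on the finite type `α`. -/
noncomputable def unifVar {α : Type*} [Fintype α] (f : α → ℝ) : ℝ :=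
  unifExpect fun x => (f x - unifExpect f) ^ 2

/-- `max_{1 ≤ i ≤ k} π(i)`: the maximum card value (in `{1, …, n}`, i.e. `val + 1`)
among the first `k` positions of `π`. -/
def maxFirst (n k : ℕ) (π : Equiv.Perm (Fin n)) : ℕ :=
  (Finset.univ.filter fun i : Fin n => (i : ℕ) < k).sup fun i => (π i : ℕ) + 1

/-- The number of fixed points among the first `k` positions of `π`. -/
def fixedFirst (n k : ℕ) (π : Equiv.Perm (Fin n)) : ℕ :=
  (Finset.univ.filter fun i : Fin n => (i : ℕ) < k ∧ π i = i).card


/-- Number of descents of a finite sequence in a linear order. -/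
def desC {α : Type*} [LinearOrder α] {n : ℕ} (f : Fin n → α) : ℕ :=
  (Finset.univ.filter fun p : Fin n × Fin n =>
    (p.1 : ℕ) + 1 = (p.2 : ℕ) ∧ f p.2 < f p.1).card

lemma descentCount_eq_desC {n : ℕ} (π : Equiv.Perm (Fin n)) :
    descentCount π = desC (fun i => π i) := rfl

lemma desC_congr {α β : Type*} [LinearOrder α] [LinearOrder β] {n : ℕ} {f : Fin n → α}
    {g : Fin n → β} (h : ∀ i j, f i < f j ↔ g i < g j) : desC f = desC g := by
  unfold desC
  simp only [h]

lemma desC_le_of_agree {α : Type*} [LinearOrder α] {n : ℕ} {f g : Fin n → α} {k : ℕ}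
    (h : ∀ i : Fin n, (i : ℕ) < k → f i = g i) : desC f ≤ desC g + (n - k) := by
  unfold desC
  set E : Finset (Fin n × Fin n) := Finset.univ.filter fun p : Fin n × Fin n =>
    (p.1 : ℕ) + 1 = (p.2 : ℕ) ∧ k ≤ (p.2 : ℕ)
  have hE : E.card ≤ n - k := by
    rw [← Nat.card_Ico]
    apply Finset.card_le_card_of_injOn (fun p => (p.2 : ℕ))
    · intro p hp
      simp only [E, coe_filter, mem_univ, true_and, Set.mem_ofPred_eq] at hp
      simp only [coe_Ico, Set.mem_Ico]
      exact ⟨hp.2, p.2.2⟩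
    · intro p hp q hq hpq
      simp only [E, coe_filter, mem_univ, true_and, Set.mem_ofPred_eq] at hp hq hpq
      apply Prod.ext <;> apply Fin.ext <;> omega
  refine le_trans ?_ (Nat.add_le_add_left hE _)
  refine le_trans (Finset.card_le_card ?_) (Finset.card_union_le _ _)
  intro p hp
  simp only [E, mem_filter, mem_univ, true_and, mem_union] at hp ⊢
  by_cases hk : k ≤ (p.2 : ℕ)
  · exact Or.inr ⟨hp.1, hk⟩
  · left
    rw [← h p.1 (by omega), ← h p.2 (by omega)]
    exact hp

lemma moveToTop_mul {n : ℕ} (τ π : Equiv.Perm (Fin n)) (c : Fin n) :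
    moveToTop (τ c) (τ * π) = τ * moveToTop c π := by
  unfold moveToTop
  simp [mul_assoc]

lemma moveToTop_zero {m : ℕ} (c : Fin (m + 1)) (π : Equiv.Perm (Fin (m + 1))) :
    moveToTop c π 0 = c := by
  unfold moveToTop
  rw [Equiv.Perm.mul_apply]
  have h : ((π⁻¹ c).cycleRange)⁻¹ 0 = π⁻¹ c := Fin.cycleRange_symm_zero _
  rw [h]
  simp

lemma moveToTop_succ {m : ℕ} (c : Fin (m + 1)) (π : Equiv.Perm (Fin (m + 1))) (j : Fin m) :
    moveToTop c π j.succ = π ((π⁻¹ c).succAbove j) := by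
  unfold moveToTop
  rw [Equiv.Perm.mul_apply]
  congr 1
  exact Fin.cycleRange_symm_succ _ _

/-- The two decks agree on the first `A.card` positions, which hold the cards of `A`. -/
def DeckInv {n : ℕ} (A : Finset (Fin n)) (π ρ : Equiv.Perm (Fin n)) : Prop :=
  (∀ i : Fin n, π i ∈ A ↔ (i : ℕ) < A.card) ∧ ∀ i : Fin n, (i : ℕ) < A.card → π i = ρ i

lemma succAbove_val {m : ℕ} (p : Fin (m + 1)) (j : Fin m) :
    ((p.succAbove j : Fin (m + 1)) : ℕ) = if (j : ℕ) < (p : ℕ) then (j : ℕ) else (j : ℕ) + 1 := by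
  unfold Fin.succAbove
  simp only [Fin.lt_def, Fin.val_castSucc]
  split_ifs <;> simp

lemma DeckInv.step {n : ℕ} {A : Finset (Fin n)} {π ρ : Equiv.Perm (Fin n)} (h : DeckInv A π ρ)
    (c : Fin n) : DeckInv (insert c A) (moveToTop c π) (moveToTop c ρ) := by
  obtain ⟨h1, h2⟩ := h
  rcases n with _ | m
  · exact c.elim0
  set p := π⁻¹ c with hp
  set q := ρ⁻¹ c with hq
  have hπp : π p = c := by simp [hp]
  have hρq : ρ q = c := by simp [hq]
  by_cases hc : c ∈ A
  · rw [Finset.insert_eq_of_mem hc]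
    have hpk : (p : ℕ) < A.card := by rw [← h1, hπp]; exact hc
    have hqp : q = p := by
      apply ρ.injective
      rw [hρq, ← h2 p hpk, hπp]
    have key : ∀ j : Fin m, ((p.succAbove j : Fin (m + 1)) : ℕ) < A.card ↔ (j : ℕ) + 1 < A.card := by
      intro j
      rw [succAbove_val]
      split_ifs <;> omega
    constructor
    · intro i
      induction i using Fin.cases with
      | zero =>
        rw [moveToTop_zero]
        simp only [hc, true_iff, Fin.val_zero]
        omega
      | succ j =>
        rw [moveToTop_succ, h1, ← hp, key, Fin.val_succ]
    · intro i hi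
      induction i using Fin.cases with
      | zero => rw [moveToTop_zero, moveToTop_zero]
      | succ j =>
        rw [moveToTop_succ, moveToTop_succ, ← hp, ← hq, hqp]
        apply h2
        rw [key]
        simpa using hi
  · have hcard : (insert c A).card = A.card + 1 := Finset.card_insert_of_notMem hc
    have hpk : A.card ≤ (p : ℕ) := by
      by_contra hlt
      push Not at hlt
      rw [← h1, hπp] at hlt
      exact hc hlt
    have hqk : A.card ≤ (q : ℕ) := by
      by_contra hlt
      push Not at hlt
      have := h2 q hlt
      rw [← h1, this, hρq] at hlt
      exact hc hlt
    constructor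
    · intro i
      rw [hcard]
      induction i using Fin.cases with
      | zero =>
        rw [moveToTop_zero]
        simp
      | succ j =>
        rw [moveToTop_succ, Finset.mem_insert, h1, ← hp, succAbove_val, Fin.val_succ]
        have hne : π (p.succAbove j) ≠ c := by
          rw [← hπp]
          intro he
          exact Fin.succAbove_ne p j (π.injective he)
        simp only [hne, false_or]
        split_ifs <;> omega
    · intro i hi
      rw [hcard] at hi
      induction i using Fin.cases with
      | zero => rw [moveToTop_zero, moveToTop_zero]
      | succ j =>
        rw [Fin.val_succ] at hi
        rw [moveToTop_succ, moveToTop_succ, ← hp, ← hq]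
        have e1 : p.succAbove j = j.castSucc := by
          apply Fin.ext
          rw [succAbove_val, if_pos (by omega)]
          simp
        have e2 : q.succAbove j = j.castSucc := by
          apply Fin.ext
          rw [succAbove_val, if_pos (by omega)]
          simp
        rw [e1, e2]
        apply h2
        simp only [Fin.val_castSucc]
        omega

lemma DeckInv.foldl {n : ℕ} (L : List (Fin n)) : ∀ {A : Finset (Fin n)} {π ρ : Equiv.Perm (Fin n)},
    DeckInv A π ρ → DeckInv (A ∪ L.toFinset) (L.foldl (fun π c => moveToTop c π) π)
      (L.foldl (fun π c => moveToTop c π) ρ) := by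
  induction L with
  | nil =>
    intro A π ρ h
    simpa using h
  | cons c L ih =>
    intro A π ρ h
    have := ih (h.step c)
    simpa using this

lemma foldl_mul {n : ℕ} (τ : Equiv.Perm (Fin n)) (L : List (Fin n)) : ∀ π : Equiv.Perm (Fin n),
    (L.map τ).foldl (fun π c => moveToTop c π) (τ * π) =
      τ * L.foldl (fun π c => moveToTop c π) π := by
  induction L with
  | nil => intro π; simp
  | cons c L ih =>
    intro π
    simp only [List.map_cons, List.foldl_cons, moveToTop_mul, ih]

lemma rtt_agree {n r : ℕ} (s : Fin r → Fin n) (τ : Equiv.Perm (Fin n)) (i : Fin n)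
    (hi : (i : ℕ) < distinctCount n r s) :
    rttPerm n r (τ ∘ s) i = (τ * rttPerm n r s) i := by
  have h0 : DeckInv (∅ : Finset (Fin n)) 1 τ := by constructor <;> simp
  have h := (DeckInv.foldl (List.ofFn (τ ∘ s)) h0).2 i
  have e : τ * rttPerm n r s = (List.ofFn (τ ∘ s)).foldl (fun π c => moveToTop c π) τ := by
    have := foldl_mul τ (List.ofFn s) 1
    rw [List.map_ofFn, mul_one] at this
    rw [this]
    rfl
  rw [e]
  apply h
  have : (∅ ∪ (List.ofFn (τ ∘ s)).toFinset : Finset (Fin n)) = (Finset.univ.image s).image τ := by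
    ext x
    simp [List.mem_ofFn]
  rw [this, Finset.card_image_of_injective _ τ.injective]
  exact hi

lemma distinctCount_comp {n r : ℕ} (s : Fin r → Fin n) (τ : Equiv.Perm (Fin n)) :
    distinctCount n r (τ ∘ s) = distinctCount n r s := by
  unfold distinctCount
  rw [← Finset.image_image, Finset.card_image_of_injective _ τ.injective]

lemma rtt_des_close {n r : ℕ} (s : Fin r → Fin n) (τ : Equiv.Perm (Fin n)) :
    |(descentCount (rttPerm n r (τ ∘ s)) : ℝ) - (descentCount (τ * rttPerm n r s) : ℝ)| ≤
      ((n - distinctCount n r s : ℕ) : ℝ) := by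
  have h1 : descentCount (rttPerm n r (τ ∘ s)) ≤
      descentCount (τ * rttPerm n r s) + (n - distinctCount n r s) :=
    desC_le_of_agree (fun i hi => rtt_agree s τ i hi)
  have h2 : descentCount (τ * rttPerm n r s) ≤ descentCount (rttPerm n r (τ ∘ s))
      + (n - distinctCount n r s) :=
    desC_le_of_agree (fun i hi => (rtt_agree s τ i hi).symm)
  rw [abs_le]
  constructor
  · have : (descentCount (τ * rttPerm n r s) : ℝ) ≤ descentCount (rttPerm n r (τ ∘ s))
      + ((n - distinctCount n r s : ℕ) : ℝ) := by exact_mod_cast h2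
    linarith
  · have : (descentCount (rttPerm n r (τ ∘ s)) : ℝ) ≤ descentCount (τ * rttPerm n r s)
      + ((n - distinctCount n r s : ℕ) : ℝ) := by exact_mod_cast h1
    linarith

lemma sum_missing {n r : ℕ} :
    ∑ s : Fin r → Fin n, (n - distinctCount n r s) = n * (n - 1) ^ r := by
  have h : ∀ s : Fin r → Fin n, n - distinctCount n r s =
      ∑ c : Fin n, if (∀ i, s i ≠ c) then 1 else 0 := by
    intro s
    rw [Finset.sum_boole]
    have := Finset.card_compl (Finset.univ.image s)
    rw [Fintype.card_fin] at this
    unfold distinctCount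
    rw [← this]
    simp only [Nat.cast_id]
    congr 1
    ext c
    simp
  simp only [h]
  rw [Finset.sum_comm]
  have h2 : ∀ c : Fin n, (∑ s : Fin r → Fin n, if (∀ i, s i ≠ c) then 1 else 0) = (n - 1) ^ r := by
    intro c
    rw [Finset.sum_boole]
    have : (Finset.univ.filter fun s : Fin r → Fin n => ∀ i, s i ≠ c) =
        Fintype.piFinset (fun _ : Fin r => Finset.univ.erase c) := by
      ext s
      simp [Fintype.mem_piFinset]
    rw [this, Fintype.card_piFinset]
    simp [Finset.card_erase_of_mem]
  simp [h2]

lemma unifExpect_missing_le {n r : ℕ} (hn : 0 < n) :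
    unifExpect (fun s : Fin r → Fin n => ((n - distinctCount n r s : ℕ) : ℝ)) ≤
      n * Real.exp (-(r : ℝ) / n) := by
  unfold unifExpect
  have hn' : (0 : ℝ) < n := by exact_mod_cast hn
  rw [← Nat.cast_sum, sum_missing]
  simp only [Fintype.card_fun, Fintype.card_fin, Nat.cast_mul, Nat.cast_pow]
  rw [Nat.cast_sub hn, mul_div_assoc, ← div_pow]
  gcongr
  have h1 : ((n : ℝ) - (1 : ℕ)) / n ≤ Real.exp (-(1 / n)) := by
    have := Real.add_one_le_exp (-(1 / (n : ℝ)))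
    refine le_trans (le_of_eq ?_) this
    push_cast
    field_simp
    ring
  have h0 : 0 ≤ ((n : ℝ) - (1 : ℕ)) / n := by
    apply div_nonneg _ hn'.le
    have : (1 : ℝ) ≤ n := by exact_mod_cast hn
    simpa using this
  calc (((n : ℝ) - (1 : ℕ)) / n) ^ r ≤ (Real.exp (-(1 / n))) ^ r := pow_le_pow_left₀ h0 h1 r
    _ = Real.exp (-(r : ℝ) / n) := by
      rw [← Real.exp_nat_mul]
      congr 1
      ring

lemma rtt_expect_close {n r : ℕ} (hn : 0 < n) (F : ℝ → ℝ) (C : ℝ) (hC : 0 ≤ C)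
    (hF : ∀ x y, |F x - F y| ≤ C * |x - y|) :
    |unifExpect (fun s : Fin r → Fin n => F (descentCount (rttPerm n r s)))
      - unifExpect (fun τ : Equiv.Perm (Fin n) => F (descentCount τ))| ≤
      C * (n * Real.exp (-(r : ℝ) / n)) := by
  have : Nonempty (Fin n) := ⟨⟨0, hn⟩⟩
  set N : ℝ := (Fintype.card (Fin r → Fin n) : ℝ) with hN
  set M : ℝ := (Fintype.card (Equiv.Perm (Fin n)) : ℝ) with hM
  have hNpos : 0 < N := by
    rw [hN]; exact_mod_cast Fintype.card_pos
  have hMpos : 0 < M := by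
    rw [hM]; exact_mod_cast Fintype.card_pos
  have e1 : ∑ τ : Equiv.Perm (Fin n), ∑ s : Fin r → Fin n, F (descentCount (rttPerm n r (τ ∘ s)))
      = M * ∑ s : Fin r → Fin n, F (descentCount (rttPerm n r s)) := by
    have : ∀ τ : Equiv.Perm (Fin n), ∑ s : Fin r → Fin n, F (descentCount (rttPerm n r (τ ∘ s)))
      = ∑ s : Fin r → Fin n, F (descentCount (rttPerm n r s)) := by
      intro τ
      exact Equiv.sum_comp (Equiv.arrowCongr (Equiv.refl (Fin r)) τ)
        (fun s => F (descentCount (rttPerm n r s)))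
    simp [this, hM]
  have e2 : ∑ τ : Equiv.Perm (Fin n), ∑ s : Fin r → Fin n, F (descentCount (τ * rttPerm n r s))
      = N * ∑ τ : Equiv.Perm (Fin n), F (descentCount τ) := by
    rw [Finset.sum_comm]
    have : ∀ s : Fin r → Fin n, ∑ τ : Equiv.Perm (Fin n), F (descentCount (τ * rttPerm n r s))
      = ∑ τ : Equiv.Perm (Fin n), F (descentCount τ) := by
      intro s
      exact Equiv.sum_comp (Equiv.mulRight (rttPerm n r s)) (fun τ => F (descentCount τ))
    simp [this, hN]
  have e3 : unifExpect (fun s : Fin r → Fin n => F (descentCount (rttPerm n r s)))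
      - unifExpect (fun τ : Equiv.Perm (Fin n) => F (descentCount τ)) =
      (∑ τ : Equiv.Perm (Fin n), ∑ s : Fin r → Fin n, (F (descentCount (rttPerm n r (τ ∘ s)))
        - F (descentCount (τ * rttPerm n r s)))) / (M * N) := by
    simp only [Finset.sum_sub_distrib]
    rw [e1, e2]
    unfold unifExpect
    rw [← hN, ← hM]
    field_simp
  rw [e3, abs_div, abs_of_pos (mul_pos hMpos hNpos), div_le_iff₀ (mul_pos hMpos hNpos)]
  have e4 := unifExpect_missing_le (r := r) hn
  unfold unifExpect at e4
  rw [← hN, div_le_iff₀ hNpos] at e4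
  calc _ ≤ ∑ τ : Equiv.Perm (Fin n), ∑ s : Fin r → Fin n,
        C * ((n - distinctCount n r s : ℕ) : ℝ) := by
        refine (Finset.abs_sum_le_sum_abs _ _).trans (Finset.sum_le_sum fun τ _ => ?_)
        refine (Finset.abs_sum_le_sum_abs _ _).trans (Finset.sum_le_sum fun s _ => ?_)
        exact (hF _ _).trans (mul_le_mul_of_nonneg_left (rtt_des_close s τ) hC)
    _ = M * (C * ∑ s : Fin r → Fin n, ((n - distinctCount n r s : ℕ) : ℝ)) := by
        rw [Finset.sum_const, ← Finset.mul_sum]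
        simp [hM]
    _ ≤ M * (C * (n * Real.exp (-(r : ℝ) / n) * N)) := by gcongr
    _ = _ := by ring

/-- The representative in `[0, 1)` of a point of the circle. -/
noncomputable def lft (x : UnitAddCircle) : ℝ := (AddCircle.equivIco 1 0 x : ℝ)

lemma lft_nonneg (x : UnitAddCircle) : 0 ≤ lft x := (AddCircle.equivIco 1 0 x).2.1

lemma lft_lt_one (x : UnitAddCircle) : lft x < 1 := by
  have := (AddCircle.equivIco (1 : ℝ) 0 x).2.2
  simpa [lft] using this

lemma coe_lft (x : UnitAddCircle) : ((lft x : ℝ) : UnitAddCircle) = x :=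
  AddCircle.coe_equivIco

lemma lft_coe (a : ℝ) : lft (a : UnitAddCircle) = Int.fract a := by
  have := AddCircle.coe_equivIco_mk_apply (1 : ℝ) a
  rw [div_one, mul_one] at this
  exact this

lemma lft_injective : Function.Injective lft := by
  intro x y h
  rw [← coe_lft x, ← coe_lft y, h]

lemma measurable_lft : Measurable lft :=
  measurable_subtype_coe.comp (AddCircle.measurableEquivIco 1 0).measurable

lemma lft_add (x u : UnitAddCircle) :
    lft x + lft u = lft (x + u) + if lft (x + u) < lft x then 1 else 0 := by
  have h : lft (x + u) = Int.fract (lft x + lft u) := by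
    rw [← lft_coe]
    congr 1
    rw [AddCircle.coe_add, coe_lft, coe_lft]
  have h1 := lft_nonneg x
  have h2 := lft_nonneg u
  have h3 := lft_lt_one x
  have h4 := lft_lt_one u
  by_cases hlt : lft x + lft u < 1
  · rw [Int.fract_eq_self.2 ⟨by linarith, hlt⟩] at h
    rw [h, if_neg (by linarith)]
    simp
  · push Not at hlt
    have : Int.fract (lft x + lft u) = lft x + lft u - 1 := by
      rw [Int.fract_eq_iff]
      refine ⟨by linarith, by linarith, 1, by simp⟩
    rw [this] at h
    rw [h, if_pos (by linarith)]
    ring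

lemma integral_lft : ∫ x : UnitAddCircle, lft x = 1 / 2 := by
  rw [← UnitAddCircle.integral_preimage 0, ← integral_Ico_eq_integral_Ioc]
  have : ∫ a in Set.Ico (0 : ℝ) (0 + 1), lft (a : UnitAddCircle) = ∫ a in Set.Ico (0 : ℝ) (0 + 1), a := by
    apply setIntegral_congr_fun measurableSet_Ico
    intro a ha
    simp only [zero_add, Set.mem_Ico] at ha
    simp only [lft_coe]
    exact Int.fract_eq_self.2 ha
  rw [this, integral_Ico_eq_integral_Ioc, ← intervalIntegral.integral_of_le (by norm_num)]
  simp

lemma integral_lft_sq : ∫ x : UnitAddCircle, lft x ^ 2 = 1 / 3 := by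
  rw [← UnitAddCircle.integral_preimage 0, ← integral_Ico_eq_integral_Ioc]
  have : ∫ a in Set.Ico (0 : ℝ) (0 + 1), lft (a : UnitAddCircle) ^ 2 =
      ∫ a in Set.Ico (0 : ℝ) (0 + 1), a ^ 2 := by
    apply setIntegral_congr_fun measurableSet_Ico
    intro a ha
    simp only [zero_add, Set.mem_Ico] at ha
    simp only [lft_coe]
    rw [Int.fract_eq_self.2 ha]
  rw [this, integral_Ico_eq_integral_Ioc, ← intervalIntegral.integral_of_le (by norm_num)]
  norm_num [integral_pow]

instance probCircle : IsProbabilityMeasure (volume : Measure UnitAddCircle) :=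
  ⟨UnitAddCircle.measure_univ⟩

lemma memLp_lft : MemLp lft 2 (volume : Measure UnitAddCircle) := by
  apply MemLp.of_bound measurable_lft.aestronglyMeasurable 1
  filter_upwards with x
  rw [Real.norm_eq_abs, abs_of_nonneg (lft_nonneg x)]
  exact (lft_lt_one x).le

lemma variance_lft : Var[lft; (volume : Measure UnitAddCircle)] = 1 / 12 := by
  rw [variance_eq_sub memLp_lft]
  simp only [Pi.pow_apply]
  rw [integral_lft, integral_lft_sq]
  norm_num

/-- The iid uniform sequence space. -/
noncomputable abbrev seqMeasure : Measure (ℕ → UnitAddCircle) :=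
  Measure.infinitePi (fun _ : ℕ => (volume : Measure UnitAddCircle))

lemma clt_lft : TendstoInDistribution
    (fun (n : ℕ) (ω : ℕ → UnitAddCircle) =>
      (Real.sqrt n)⁻¹ * (∑ k ∈ Finset.range n, lft (ω k) - n * (1 / 2 : ℝ)))
    atTop (id : ℝ → ℝ) (fun _ => seqMeasure) (gaussianReal 0 (1 / 12 : ℝ≥0)) := by
  have hmp := fun i : ℕ => measurePreserving_eval_infinitePi
    (fun _ : ℕ => (volume : Measure UnitAddCircle)) i
  have hid : ∀ i : ℕ, IdentDistrib (fun ω : ℕ → UnitAddCircle => lft (ω i)) lft seqMeasure volume := by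
    intro i
    refine ⟨(measurable_lft.comp (measurable_pi_apply i)).aemeasurable,
      measurable_lft.aemeasurable, ?_⟩
    have := (hmp i).map_eq
    conv_rhs => rw [← this]
    rw [Measure.map_map measurable_lft (measurable_pi_apply i)]
    rfl
  have hE : seqMeasure[fun ω : ℕ → UnitAddCircle => lft (ω 0)] = 1 / 2 := by
    rw [(hid 0).integral_eq, integral_lft]
  have hV : Var[fun ω : ℕ → UnitAddCircle => lft (ω 0); seqMeasure] = 1 / 12 := by
    rw [(hid 0).variance_eq, variance_lft]
  have := tendstoInDistribution_inv_sqrt_mul_sum_sub (P := seqMeasure)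
    (P' := gaussianReal 0 (1 / 12 : ℝ≥0)) (Y := id)
    (X := fun (k : ℕ) (ω : ℕ → UnitAddCircle) => lft (ω k)) ?_ ?_ ?_ ?_
  · simpa only [hE] using this
  · rw [hV]
    have : (1 / 12 : ℝ).toNNReal = 1 / 12 := by
      apply NNReal.eq
      rw [Real.coe_toNNReal _ (by norm_num)]
      simp
    rw [this]
    exact HasLaw.id
  · exact (hid 0).memLp_iff.2 memLp_lft
  · exact iIndepFun_infinitePi (X := fun _ => lft) (fun _ => measurable_lft)
  · intro i
    exact (hid i).trans (hid 0).symm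

lemma measurePreserving_hom {n : ℕ} {H : Type*} [AddCommGroup H] [TopologicalSpace H]
    [IsTopologicalAddGroup H] [CompactSpace H] [MeasurableSpace H] [BorelSpace H]
    {ν : Measure H} [ν.IsAddHaarMeasure] [IsProbabilityMeasure ν]
    (f : (Fin n → UnitAddCircle) →+ H) (hc : Continuous f) (hs : Function.Surjective f) :
    MeasurePreserving f (volume : Measure (Fin n → UnitAddCircle)) ν :=
  AddMonoidHom.measurePreserving hc hs (by simp)

lemma ae_injective (n : ℕ) :
    ∀ᵐ v : Fin n → UnitAddCircle, Function.Injective v := by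
  have h : ∀ i j : Fin n, i ≠ j → ∀ᵐ v : Fin n → UnitAddCircle, v i ≠ v j := by
    intro i j hij
    let f : (Fin n → UnitAddCircle) →+ UnitAddCircle :=
      Pi.evalAddMonoidHom (fun _ => UnitAddCircle) i - Pi.evalAddMonoidHom (fun _ => UnitAddCircle) j
    have hf : MeasurePreserving f volume volume := by
      apply measurePreserving_hom
      · exact (continuous_apply i).sub (continuous_apply j)
      · intro x
        refine ⟨Pi.single i x, ?_⟩
        simp [f, hij.symm]
    have h0 : ∀ᵐ x : UnitAddCircle, x ≠ 0 := by
      rw [ae_iff]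
      have h := AddCircle.volume_closedBall (T := (1 : ℝ)) (x := 0) 0
      rw [Metric.closedBall_zero] at h
      simpa using h
    filter_upwards [hf.quasiMeasurePreserving.ae h0] with v hv hvv
    apply hv
    simp [f, hvv]
  have h' : ∀ᵐ v : Fin n → UnitAddCircle, ∀ i j : Fin n, i ≠ j → v i ≠ v j := by
    rw [ae_all_iff]; intro i
    rw [ae_all_iff]; intro j
    by_cases hij : i = j
    · simp [hij]
    · filter_upwards [h i j hij] with v hv _ using hv
  filter_upwards [h'] with v hv i j hvv
  by_contra hne
  exact hv i j hne hvv

lemma measurable_desC {n : ℕ} :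
    Measurable (fun v : Fin n → UnitAddCircle => desC (fun i => lft (v i))) := by
  have : (fun v : Fin n → UnitAddCircle => desC (fun i => lft (v i))) =
      fun v => ∑ p : Fin n × Fin n,
        if ((p.1 : ℕ) + 1 = (p.2 : ℕ) ∧ lft (v p.2) < lft (v p.1)) then 1 else 0 := by
    funext v
    unfold desC
    rw [Finset.card_filter]
  rw [this]
  apply Finset.measurable_sum
  intro p _
  apply Measurable.ite _ measurable_const measurable_const
  by_cases hp : (p.1 : ℕ) + 1 = (p.2 : ℕ)
  · simp only [hp, true_and]
    exact measurableSet_lt (measurable_lft.comp (measurable_pi_apply _))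
      (measurable_lft.comp (measurable_pi_apply _))
  · simp [hp]

lemma desC_le {α : Type*} [LinearOrder α] {n : ℕ} (f : Fin n → α) : desC f ≤ n := by
  have := desC_le_of_agree (f := f) (g := f) (k := 0) (by simp)
  unfold desC at *
  have hE : (Finset.univ.filter fun p : Fin n × Fin n =>
    (p.1 : ℕ) + 1 = (p.2 : ℕ) ∧ f p.2 < f p.1).card ≤ (Finset.univ : Finset (Fin n)).card := by
    apply Finset.card_le_card_of_injOn (fun p => p.2)
    · intro p hp
      simp
    · intro p hp q hq hpq
      simp only [coe_filter, mem_univ, true_and, Set.mem_ofPred_eq] at hp hq hpq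
      rw [Fin.ext_iff] at hpq
      apply Prod.ext <;> apply Fin.ext <;> omega
  simpa using hE

lemma integrable_desC {n : ℕ} (F : ℕ → ℝ) (μ : Measure (Fin n → UnitAddCircle))
    [IsProbabilityMeasure μ] (τ : Equiv.Perm (Fin n)) :
    Integrable (fun v : Fin n → UnitAddCircle => F (desC (fun i => lft (v (τ i))))) μ := by
  have hm : Measurable (fun v : Fin n → UnitAddCircle => F (desC (fun i => lft (v (τ i))))) := by
    apply (measurable_of_countable F).comp
    have hτ : Measurable (fun (v : Fin n → UnitAddCircle) (i : Fin n) => v (τ i)) :=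
      measurable_pi_lambda _ fun i => measurable_pi_apply (τ i)
    exact measurable_desC.comp hτ
  refine Integrable.of_bound hm.aestronglyMeasurable (∑ k ∈ Finset.range (n + 1), |F k|) ?_
  filter_upwards with v
  rw [Real.norm_eq_abs]
  exact Finset.single_le_sum (f := fun k => |F k|) (fun k _ => abs_nonneg _)
    (Finset.mem_range.2 (Nat.lt_succ_of_le (desC_le _)))

lemma sum_perm_desC {n : ℕ} (F : ℕ → ℝ) (v : Fin n → ℝ) (hv : Function.Injective v) :
    ∑ τ : Equiv.Perm (Fin n), F (desC (fun i => v (τ i))) =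
      ∑ τ : Equiv.Perm (Fin n), F (descentCount τ) := by
  set σ := Tuple.sort v with hσ
  have hmono : StrictMono (v ∘ σ) :=
    (Tuple.monotone_sort v).strictMono_of_injective (hv.comp σ.injective)
  have key : ∀ i j, v i < v j ↔ σ⁻¹ i < σ⁻¹ j := by
    intro i j
    rw [← hmono.lt_iff_lt]
    simp
  rw [← Equiv.sum_comp (Equiv.mulLeft σ⁻¹) (fun τ => F (descentCount τ))]
  apply Finset.sum_congr rfl
  intro τ _
  congr 1
  rw [descentCount_eq_desC]
  apply desC_congr
  intro i j
  rw [key]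
  rfl

lemma integral_desC {n : ℕ} (F : ℕ → ℝ) :
    ∫ v : Fin n → UnitAddCircle, F (desC (fun i => lft (v i))) =
      unifExpect (fun τ : Equiv.Perm (Fin n) => F (descentCount τ)) := by
  have hτ : ∀ τ : Equiv.Perm (Fin n), ∫ v : Fin n → UnitAddCircle, F (desC (fun i => lft (v (τ i))))
      = ∫ v : Fin n → UnitAddCircle, F (desC (fun i => lft (v i))) := by
    intro τ
    let f : (Fin n → UnitAddCircle) →+ (Fin n → UnitAddCircle) :=
      { toFun := fun v => v ∘ τ
        map_zero' := rfl
        map_add' := fun _ _ => rfl }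
    have hf : MeasurePreserving f volume volume := by
      apply measurePreserving_hom
      · exact continuous_pi fun i => continuous_apply (τ i)
      · intro x
        refine ⟨x ∘ τ.symm, ?_⟩
        funext i
        simp [f]
    have hm : AEStronglyMeasurable (fun v : Fin n → UnitAddCircle => F (desC (fun i => lft (v i))))
        (volume.map f) := ((measurable_of_countable F).comp measurable_desC).aestronglyMeasurable
    have := integral_map hf.measurable.aemeasurable hm
    rw [hf.map_eq] at this
    rw [this]
    rfl
  have hsum : ∫ v : Fin n → UnitAddCircle,
      ∑ τ : Equiv.Perm (Fin n), F (desC (fun i => lft (v (τ i)))) =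
      ∑ τ : Equiv.Perm (Fin n), F (descentCount τ) := by
    have : ∀ᵐ v : Fin n → UnitAddCircle,
      ∑ τ : Equiv.Perm (Fin n), F (desC (fun i => lft (v (τ i)))) =
      ∑ τ : Equiv.Perm (Fin n), F (descentCount τ) := by
      filter_upwards [ae_injective n] with v hv
      exact sum_perm_desC F (fun i => lft (v i)) (lft_injective.comp hv)
    rw [integral_congr_ae this]
    simp
  rw [integral_finsetSum _ (fun τ _ => integrable_desC F volume τ)] at hsum
  simp only [hτ] at hsum
  unfold unifExpect
  rw [← hsum, Finset.sum_const, nsmul_eq_mul, Finset.card_univ]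
  rw [mul_div_cancel_left₀]
  exact_mod_cast Fintype.card_ne_zero

/-- Partial sums on the circle. -/
noncomputable def psum (k : ℕ) (ω : ℕ → UnitAddCircle) : UnitAddCircle :=
  ∑ j ∈ Finset.range (k + 1), ω j

lemma sum_lft (ω : ℕ → UnitAddCircle) (m : ℕ) :
    ∑ j ∈ Finset.range (m + 1), lft (ω j) = lft (psum m ω) +
      ((desC (fun i : Fin (m + 1) => lft (psum i ω)) : ℕ) : ℝ) := by
  have h1 : ∀ m : ℕ, ∑ j ∈ Finset.range (m + 1), lft (ω j) = lft (psum m ω) +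
      ∑ k ∈ Finset.range m, if lft (psum (k + 1) ω) < lft (psum k ω) then (1 : ℝ) else 0 := by
    intro m
    induction m with
    | zero => simp [psum]
    | succ m ih =>
      rw [Finset.sum_range_succ, ih, Finset.sum_range_succ]
      have : psum (m + 1) ω = psum m ω + ω (m + 1) := by
        unfold psum
        rw [Finset.sum_range_succ]
      have h := lft_add (psum m ω) (ω (m + 1))
      rw [← this] at h
      linarith
  rw [h1, Finset.sum_boole]
  congr 2
  unfold desC
  symm
  refine Finset.card_bij (fun p _ => (p.1 : ℕ)) ?_ ?_ ?_
  · intro p hp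
    simp only [mem_filter, mem_univ, true_and, mem_range] at hp ⊢
    have := p.2.2
    refine ⟨by omega, ?_⟩
    rw [hp.1]
    exact hp.2
  · intro p hp q hq hpq
    simp only [mem_filter, mem_univ, true_and] at hp hq
    apply Prod.ext <;> apply Fin.ext <;> omega
  · intro k hk
    simp only [mem_filter, mem_range] at hk
    refine ⟨(⟨k, by omega⟩, ⟨k + 1, by omega⟩), ?_, rfl⟩
    simp only [mem_filter, mem_univ, true_and]
    exact hk.2

/-- The partial-sum homomorphism on `Fin (m+1)`-tuples. -/
noncomputable def psumHom (m : ℕ) : (Fin m → UnitAddCircle) →+ (Fin m → UnitAddCircle) where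
  toFun v := fun i => ∑ j ∈ Finset.range ((i : ℕ) + 1), if h : j < m then v ⟨j, h⟩ else 0
  map_zero' := by
    funext i
    simp
  map_add' u v := by
    funext i
    simp only [Pi.add_apply]
    rw [← Finset.sum_add_distrib]
    apply Finset.sum_congr rfl
    intro j _
    split_ifs <;> simp

lemma psumHom_apply (m : ℕ) (v : Fin m → UnitAddCircle) (i : Fin m) : psumHom m v i =
    ∑ j ∈ Finset.range ((i : ℕ) + 1), if h : j < m then v ⟨j, h⟩ else 0 := rfl

lemma psumHom_continuous (m : ℕ) : Continuous (psumHom m) := by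
  apply continuous_pi
  intro i
  simp only [psumHom_apply]
  apply continuous_finsetSum
  intro j _
  split_ifs
  · exact continuous_apply _
  · exact continuous_const

lemma psumHom_surjective (m : ℕ) : Function.Surjective (psumHom m) := by
  intro w
  let w' : ℕ → UnitAddCircle := fun k => if h : 0 < k ∧ k - 1 < m then w ⟨k - 1, h.2⟩ else 0
  refine ⟨fun i => w' (i + 1) - w' i, ?_⟩
  funext i
  have : psumHom m (fun i : Fin m => w' (i + 1) - w' i) i =
      ∑ j ∈ Finset.range ((i : ℕ) + 1), (w' (j + 1) - w' j) := by
    rw [psumHom_apply]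
    apply Finset.sum_congr rfl
    intro j hj
    rw [Finset.mem_range] at hj
    rw [dif_pos (by omega)]
  rw [this, Finset.sum_range_sub]
  simp [w']

lemma psum_law (m : ℕ) :
    MeasurePreserving (fun (ω : ℕ → UnitAddCircle) (i : Fin m) => psum i ω) seqMeasure volume := by
  have h1 : MeasurePreserving (fun (ω : ℕ → UnitAddCircle) (i : Fin m) => ω i) seqMeasure volume := by
    refine ⟨measurable_pi_lambda _ fun i => measurable_pi_apply _, ?_⟩
    rw [Measure.map_infinitePi_infinitePi_of_inj Fin.val_injective, Measure.infinitePi_eq_pi]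
    rfl
  have h2 : MeasurePreserving (psumHom m) volume volume :=
    measurePreserving_hom _ (psumHom_continuous m) (psumHom_surjective m)
  have h3 := h2.comp h1
  convert h3 using 1
  funext ω i
  rw [Function.comp_apply, psumHom_apply]
  apply Finset.sum_congr rfl
  intro j hj
  rw [Finset.mem_range] at hj
  rw [dif_pos (by omega)]

lemma perm_expect_eq (m : ℕ) (F : ℕ → ℝ) :
    unifExpect (fun τ : Equiv.Perm (Fin m) => F (descentCount τ)) =
      ∫ ω, F (desC (fun i : Fin m => lft (psum i ω))) ∂seqMeasure := by
  rw [← integral_desC, ← (psum_law m).map_eq]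
  rw [integral_map (psum_law m).measurable.aemeasurable]
  exact ((measurable_of_countable F).comp measurable_desC).aestronglyMeasurable

lemma exists_law {α : Type*} [Fintype α] [Nonempty α] (X : α → ℝ) :
    ∃ μ : ProbabilityMeasure ℝ, ∀ f : ℝ → ℝ, Measurable f →
      ∫ x, f x ∂(μ : Measure ℝ) = unifExpect (fun a => f (X a)) := by
  let _ : MeasurableSpace α := ⊤
  have : MeasurableSingletonClass α := ⟨fun _ => trivial⟩
  have hX : Measurable X := fun _ _ => trivial
  set ν : Measure α := (PMF.uniformOfFintype α).toMeasure
  have hν : IsProbabilityMeasure (ν.map X) := Measure.isProbabilityMeasure_map hX.aemeasurable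
  refine ⟨⟨ν.map X, hν⟩, fun f hf => ?_⟩
  change ∫ x, f x ∂(ν.map X) = _
  rw [integral_map hX.aemeasurable hf.aestronglyMeasurable, PMF.integral_eq_sum]
  unfold unifExpect
  rw [Finset.sum_div]
  apply Finset.sum_congr rfl
  intro a _
  simp [PMF.uniformOfFintype_apply]
  ring

lemma perm_tendsto (f : ℝ → ℝ) (hb : ∃ C : ℝ, ∀ x y, dist (f x) (f y) ≤ C) (L : ℝ≥0)
    (hL : LipschitzWith L f) :
    Tendsto (fun m : ℕ => unifExpect (fun τ : Equiv.Perm (Fin (m + 1)) =>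
      f (((descentCount τ : ℝ) - ((m + 1 : ℕ) : ℝ) / 2) / Real.sqrt ((m + 1 : ℕ) : ℝ)))) atTop
      (𝓝 (∫ x, f x ∂(gaussianReal 0 (1 / 12 : ℝ≥0)))) := by
  have hclt := clt_lft.tendsto
  have h1 := tendsto_iff_forall_lipschitz_integral_tendsto.1 hclt f hb ⟨L, hL⟩
  have hfm : Measurable f := hL.continuous.measurable
  have hbd : ∃ B : ℝ, ∀ x, ‖f x‖ ≤ B := by
    obtain ⟨C, hC⟩ := hb
    refine ⟨C + ‖f 0‖, fun x => ?_⟩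
    have h := hC x 0
    rw [dist_eq_norm] at h
    have := norm_sub_norm_le (f x) (f 0)
    linarith
  obtain ⟨B, hB⟩ := hbd
  have hYm : ∀ n : ℕ, Measurable (fun (ω : ℕ → UnitAddCircle) =>
      (Real.sqrt n)⁻¹ * (∑ k ∈ Finset.range n, lft (ω k) - n * (1 / 2 : ℝ))) := by
    intro n
    refine Measurable.const_mul (Measurable.sub_const (Finset.measurable_sum _ fun k _ => ?_) _) _
    exact measurable_lft.comp (measurable_pi_apply k)
  have h2 : Tendsto (fun n : ℕ => ∫ ω, f ((Real.sqrt n)⁻¹ *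
      (∑ k ∈ Finset.range n, lft (ω k) - n * (1 / 2 : ℝ))) ∂seqMeasure) atTop
      (𝓝 (∫ x, f x ∂(gaussianReal 0 (1 / 12 : ℝ≥0)))) := by
    have e1 : ∀ n : ℕ, ∫ x, f x ∂(seqMeasure.map (fun (ω : ℕ → UnitAddCircle) =>
      (Real.sqrt n)⁻¹ * (∑ k ∈ Finset.range n, lft (ω k) - n * (1 / 2 : ℝ)))) =
      ∫ ω, f ((Real.sqrt n)⁻¹ *
      (∑ k ∈ Finset.range n, lft (ω k) - n * (1 / 2 : ℝ))) ∂seqMeasure := fun n =>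
      integral_map (hYm n).aemeasurable hfm.aestronglyMeasurable
    simp only [← e1]
    simpa [Measure.map_id] using h1
  have h3 := (tendsto_add_atTop_iff_nat 1).2 h2
  refine tendsto_of_tendsto_of_dist h3 ?_
  have hlim : Tendsto (fun m : ℕ => (L : ℝ) * (Real.sqrt ((m + 1 : ℕ) : ℝ))⁻¹) atTop (𝓝 0) := by
    have h0 : Tendsto (fun n : ℕ => (Real.sqrt (n : ℝ))⁻¹) atTop (𝓝 0) :=
      tendsto_inv_atTop_zero.comp (Real.tendsto_sqrt_atTop.comp tendsto_natCast_atTop_atTop)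
    have := ((tendsto_add_atTop_iff_nat 1).2 h0).const_mul (L : ℝ)
    simpa using this
  refine squeeze_zero (fun _ => dist_nonneg) (fun m => ?_) hlim
  set n : ℕ := m + 1 with hn
  have hsq : 0 < Real.sqrt (n : ℝ) := Real.sqrt_pos.2 (by positivity)
  rw [perm_expect_eq n (fun k => f (((k : ℝ) - (n : ℝ) / 2) / Real.sqrt (n : ℝ))), dist_eq_norm]
  have hDm : Measurable (fun ω : ℕ → UnitAddCircle =>
      f (((desC (fun i : Fin n => lft (psum i ω)) : ℝ) - (n : ℝ) / 2) / Real.sqrt (n : ℝ))) := by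
    have := (measurable_of_countable
      (fun k : ℕ => f (((k : ℝ) - (n : ℝ) / 2) / Real.sqrt (n : ℝ)))).comp
      (measurable_desC.comp (psum_law n).measurable)
    exact this
  rw [← integral_sub]
  · have := norm_integral_le_of_norm_le_const (μ := seqMeasure) (C := (L : ℝ) * (Real.sqrt n)⁻¹)
      (f := fun ω => f ((Real.sqrt n)⁻¹ *
      (∑ k ∈ Finset.range n, lft (ω k) - n * (1 / 2 : ℝ))) -
      f (((desC (fun i : Fin n => lft (psum i ω)) : ℝ) - (n : ℝ) / 2) / Real.sqrt (n : ℝ))) ?_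
    · simpa using this
    · filter_upwards with ω
      rw [← dist_eq_norm]
      refine (hL.dist_le_mul _ _).trans ?_
      gcongr
      rw [hn, sum_lft, ← hn, Real.dist_eq]
      have e : (Real.sqrt n)⁻¹ * (lft (psum m ω) + (desC (fun i : Fin n => lft (psum i ω)) : ℝ)
          - n * (1 / 2 : ℝ)) - ((desC (fun i : Fin n => lft (psum i ω)) : ℝ) - (n : ℝ) / 2)
          / Real.sqrt n = (Real.sqrt n)⁻¹ * lft (psum m ω) := by
        field_simp
        ring
      rw [e, abs_mul, abs_of_pos (inv_pos.2 hsq), abs_of_nonneg (lft_nonneg _)]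
      exact mul_le_of_le_one_right (inv_pos.2 hsq).le (lft_lt_one _).le
  · exact Integrable.of_bound (hfm.comp (hYm n)).aestronglyMeasurable B
      (Filter.Eventually.of_forall fun ω => hB _)
  · exact Integrable.of_bound hDm.aestronglyMeasurable B
      (Filter.Eventually.of_forall fun ω => hB _)

/-- **Theorem (descents, mixed regime).** If `(r n)` are positive integers with
`r n ≥ (n log n)/2 + cₙ n` for some sequence `cₙ → ∞`, then `(D - n/2)/√n` converges in
distribution (tested against every bounded continuous function) to `N(0, 1/12)`. -/
theorem rtt_descents_mixed (r : ℕ → ℕ) (hrpos : ∀ n, 0 < r n) (cseq : ℕ → ℝ)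
    (hcseq : Tendsto cseq atTop atTop)
    (hr : ∀ n : ℕ, (n : ℝ) * Real.log n / 2 + cseq n * n ≤ (r n : ℝ)) :
    ∀ g : BoundedContinuousFunction ℝ ℝ,
      Tendsto
        (fun n : ℕ =>
          unifExpect (fun s : Fin (r n) → Fin n =>
            g (((descentCount (rttPerm n (r n) s) : ℝ) - (n : ℝ) / 2) / Real.sqrt n)))
        atTop
        (𝓝 (∫ x, g x ∂(gaussianReal 0 (1 / 12 : ℝ≥0)))) := by
  intro g
  rw [← tendsto_add_atTop_iff_nat 1]
  have hlaw : ∀ m : ℕ, ∃ μ : ProbabilityMeasure ℝ, ∀ f : ℝ → ℝ, Measurable f →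
      ∫ x, f x ∂(μ : Measure ℝ) = unifExpect (fun s : Fin (r (m + 1)) → Fin (m + 1) =>
        f (((descentCount (rttPerm (m + 1) (r (m + 1)) s) : ℝ) - ((m + 1 : ℕ) : ℝ) / 2) /
          Real.sqrt ((m + 1 : ℕ) : ℝ))) := fun m => exists_law _
  choose μ hμ using hlaw
  let γ : ProbabilityMeasure ℝ := ⟨gaussianReal 0 (1 / 12 : ℝ≥0), inferInstance⟩
  have hconv : Tendsto μ atTop (𝓝 γ) := by
    rw [tendsto_iff_forall_lipschitz_integral_tendsto]
    rintro f hb ⟨L, hL⟩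
    have hfm : Measurable f := hL.continuous.measurable
    simp only [hμ _ f hfm]
    refine tendsto_of_tendsto_of_dist (perm_tendsto f hb L hL) ?_
    have hlim : Tendsto (fun m : ℕ => (L : ℝ) * Real.exp (-cseq (m + 1))) atTop (𝓝 0) := by
      have h0 : Tendsto (fun n : ℕ => Real.exp (-cseq n)) atTop (𝓝 0) :=
        Real.tendsto_exp_neg_atTop_nhds_zero.comp hcseq
      have := ((tendsto_add_atTop_iff_nat 1).2 h0).const_mul (L : ℝ)
      simpa using this
    refine squeeze_zero (fun _ => dist_nonneg) (fun m => ?_) hlim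
    have hrn := hr (m + 1)
    set n : ℕ := m + 1 with hn
    have hnpos : (0 : ℝ) < n := by rw [hn]; positivity
    have hsq : 0 < Real.sqrt (n : ℝ) := Real.sqrt_pos.2 hnpos
    rw [dist_comm, Real.dist_eq]
    refine (rtt_expect_close (r := r n) (n := n) (by omega)
      (fun x => f ((x - (n : ℝ) / 2) / Real.sqrt (n : ℝ))) (L / Real.sqrt n)
      (by positivity) ?_).trans ?_
    · intro x y
      have h := hL.dist_le_mul ((x - (n : ℝ) / 2) / Real.sqrt (n : ℝ))
        ((y - (n : ℝ) / 2) / Real.sqrt (n : ℝ))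
      rw [Real.dist_eq, Real.dist_eq] at h
      refine h.trans (le_of_eq ?_)
      rw [← sub_div, abs_div, abs_of_pos hsq]
      have : x - (n : ℝ) / 2 - (y - (n : ℝ) / 2) = x - y := by ring
      rw [this]
      ring
    · have hexp : Real.exp (-(r n : ℝ) / n) ≤ (Real.sqrt n)⁻¹ * Real.exp (-cseq n) := by
        have e : (Real.sqrt n)⁻¹ = Real.exp (-(Real.log n / 2)) := by
          rw [Real.exp_neg, ← Real.log_sqrt hnpos.le, Real.exp_log hsq]
        rw [e, ← Real.exp_add]
        apply Real.exp_le_exp.2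
        rw [div_le_iff₀ hnpos]
        nlinarith
      calc (L : ℝ) / Real.sqrt n * (n * Real.exp (-(r n : ℝ) / n))
          ≤ (L : ℝ) / Real.sqrt n * (n * ((Real.sqrt n)⁻¹ * Real.exp (-cseq n))) := by gcongr
        _ = L * Real.exp (-cseq n) * (n / (Real.sqrt n * Real.sqrt n)) := by
          field_simp
        _ = L * Real.exp (-cseq n) := by
          rw [Real.mul_self_sqrt hnpos.le, div_self hnpos.ne', mul_one]
  have h := (ProbabilityMeasure.tendsto_iff_forall_integral_tendsto.1 hconv) g
  simp only [hμ _ g g.continuous.measurable] at h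
  exact h
end

section
/- Let (r_n) be a sequence of positive integers such that r_n ≥ (n log n)/4 + c_n n for some sequence c_n → ∞. For each n, let I^{r_n}_n be the number of inversions of the random permutation of [n] obtained by performing r_n iterated random-to-top shuffles starting from the identity. Then (I^{r_n}_n − n²/4) / n^{3/2} converges in distribution, as n → ∞, to a centered normal random variable with variance 1/36. -/
open MeasureTheory ProbabilityTheory Filter Finset Topology
open scoped NNReal

namespace RTT

lemma moveToTop_mul {n : ℕ} (ρ π : Equiv.Perm (Fin n)) (c : Fin n) :
    moveToTop (ρ c) (ρ * π) = ρ * moveToTop c π := by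
  simp [moveToTop, mul_assoc]

/-- The deck obtained from starting deck `π` by the list of moves `l`. -/
def deck {n : ℕ} (l : List (Fin n)) (π : Equiv.Perm (Fin n)) : Equiv.Perm (Fin n) :=
  l.foldl (fun π c => moveToTop c π) π

lemma deck_map {n : ℕ} (ρ : Equiv.Perm (Fin n)) (l : List (Fin n)) :
    ∀ π, deck (l.map ρ) (ρ * π) = ρ * deck l π := by
  induction l with
  | nil => intro π; rfl
  | cons c l ih =>
    intro π
    have := ih (moveToTop c π)
    simp only [deck, List.map_cons, List.foldl_cons] at this ⊢
    rw [moveToTop_mul, this]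

lemma cycleRange_lt {n : ℕ} (p x y : Fin n) (hx : x ≠ p) (hy : y ≠ p) :
    p.cycleRange x < p.cycleRange y ↔ x < y := by
  have key : ∀ z : Fin n, z ≠ p → ((p.cycleRange z : Fin n) : ℕ) =
      if z < p then (z : ℕ) + 1 else z := by
    intro z hz
    split_ifs with h
    · exact Fin.coe_cycleRange_of_lt h
    · rw [Fin.cycleRange_of_gt]
      exact lt_of_le_of_ne (not_lt.1 h) (Ne.symm hz)
  rw [Fin.lt_def, key x hx, key y hy]
  have hx' : (x : ℕ) ≠ p := fun h => hx (Fin.ext h)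
  have hy' : (y : ℕ) ≠ p := fun h => hy (Fin.ext h)
  simp only [Fin.lt_def]
  split_ifs <;> omega

lemma cycleRange_self_lt {n : ℕ} (p y : Fin n) (hy : y ≠ p) :
    p.cycleRange p < p.cycleRange y := by
  have : NeZero n := ⟨by rintro rfl; exact p.elim0⟩
  have h0 : p.cycleRange p = 0 := Fin.cycleRange_self p
  have h1 : p.cycleRange y ≠ 0 := by
    rw [← h0]; exact fun h => hy (p.cycleRange.injective h)
  rw [h0]
  exact Fin.pos_iff_ne_zero.2 h1

/-- card `a` is above card `b`. -/
def Above {n : ℕ} (π : Equiv.Perm (Fin n)) (a b : Fin n) : Prop := π⁻¹ a < π⁻¹ b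

lemma above_move {n : ℕ} (π : Equiv.Perm (Fin n)) (c a b : Fin n) (ha : a ≠ c) (hb : b ≠ c) :
    Above (moveToTop c π) a b ↔ Above π a b := by
  simp only [Above, moveToTop, mul_inv_rev, inv_inv, Equiv.Perm.mul_apply]
  exact cycleRange_lt _ _ _ (by simpa using ha) (by simpa using hb)

lemma above_move_left {n : ℕ} (π : Equiv.Perm (Fin n)) (c b : Fin n) (hb : b ≠ c) :
    Above (moveToTop c π) c b := by
  simp only [Above, moveToTop, mul_inv_rev, inv_inv, Equiv.Perm.mul_apply]
  exact cycleRange_self_lt _ _ (by simpa using hb)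

lemma above_move_right {n : ℕ} (π : Equiv.Perm (Fin n)) (c a : Fin n) (ha : a ≠ c) :
    ¬ Above (moveToTop c π) a c := by
  have := above_move_left π c a ha
  unfold Above at *
  exact not_lt.2 this.le

lemma above_deck_of_agree {n : ℕ} (a b : Fin n) (hab : a ≠ b) (l : List (Fin n)) :
    ∀ π π' : Equiv.Perm (Fin n), ((a ∈ l ∨ b ∈ l) ∨ (Above π a b ↔ Above π' a b)) →
      (Above (deck l π) a b ↔ Above (deck l π') a b) := by
  induction l with
  | nil => intro π π' h; simpa [deck] using h
  | cons c l ih =>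
    intro π π' h
    have hagree : ((a ∈ l ∨ b ∈ l) ∨
        (Above (moveToTop c π) a b ↔ Above (moveToTop c π') a b)) := by
      by_cases ha : a = c
      · subst ha
        right
        simp [above_move_left _ a b hab.symm]
      · by_cases hb : b = c
        · subst hb
          right
          simp [above_move_right _ b a hab]
        · rw [above_move _ _ _ _ ha hb, above_move _ _ _ _ ha hb]
          simpa [ha, hb] using h
    exact ih _ _ hagree

open Classical in
lemma inversionCount_eq {n : ℕ} (π : Equiv.Perm (Fin n)) :
    inversionCount π =
      (Finset.univ.filter fun p : Fin n × Fin n => p.1 < p.2 ∧ Above π p.2 p.1).card := by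
  unfold inversionCount Above
  refine Finset.card_bij' (fun p _ => (π p.2, π p.1)) (fun q _ => (π⁻¹ q.2, π⁻¹ q.1)) ?_ ?_ ?_ ?_
  · simp +contextual
  · simp +contextual
  · simp
  · simp

open Classical in
/-- number of unselected cards -/
noncomputable def missing {n : ℕ} (l : List (Fin n)) : ℕ :=
  (Finset.univ.filter fun a : Fin n => a ∉ l).card

open Classical in
lemma inv_le {n : ℕ} (l : List (Fin n)) (π π' : Equiv.Perm (Fin n)) :
    inversionCount (deck l π) ≤ inversionCount (deck l π') + missing l ^ 2 := by
  rw [inversionCount_eq, inversionCount_eq, pow_two, missing, ← Finset.card_product]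
  refine (Finset.card_le_card ?_).trans (Finset.card_union_le _ _)
  rintro ⟨a, b⟩ h
  simp only [Finset.mem_filter, Finset.mem_univ, true_and, Finset.mem_union,
    Finset.mem_product] at h ⊢
  by_cases hl : b ∈ l ∨ a ∈ l
  · left
    exact ⟨h.1, (above_deck_of_agree b a h.1.ne' l π π' (Or.inl hl)).1 h.2⟩
  · right
    push Not at hl
    exact ⟨hl.2, hl.1⟩

lemma inv_abs {n : ℕ} (l : List (Fin n)) (π π' : Equiv.Perm (Fin n)) :
    |(inversionCount (deck l π) : ℝ) - inversionCount (deck l π')| ≤ (missing l : ℝ) ^ 2 := by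
  have h1 : (inversionCount (deck l π) : ℝ) ≤ inversionCount (deck l π') + (missing l : ℝ) ^ 2 := by
    exact_mod_cast inv_le l π π'
  have h2 : (inversionCount (deck l π') : ℝ) ≤ inversionCount (deck l π) + (missing l : ℝ) ^ 2 := by
    exact_mod_cast inv_le l π' π
  rw [abs_le]; constructor <;> linarith

/-- Shuffling a uniformly random starting deck gives a uniform deck. -/
lemma sum_deck (n r : ℕ) (F : Equiv.Perm (Fin n) → ℂ) :
    (∑ s : Fin r → Fin n, ∑ σ : Equiv.Perm (Fin n), F (deck (List.ofFn s) σ)) =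
      (Fintype.card (Fin r → Fin n) : ℂ) * ∑ π, F π := by
  have h1 : ∀ ρ : Equiv.Perm (Fin n),
      (∑ s : Fin r → Fin n, ∑ σ : Equiv.Perm (Fin n), F (deck (List.ofFn s) σ)) =
      ∑ s : Fin r → Fin n, ∑ σ : Equiv.Perm (Fin n), F (ρ * deck (List.ofFn s) σ) := by
    intro ρ
    rw [← Equiv.sum_comp (Equiv.arrowCongr (Equiv.refl (Fin r)) ρ)]
    refine Finset.sum_congr rfl fun s _ => ?_
    rw [← Equiv.sum_comp (Equiv.mulLeft ρ)]
    refine Finset.sum_congr rfl fun σ _ => ?_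
    rw [← deck_map, List.map_ofFn]
    rfl
  have h2 : (Fintype.card (Equiv.Perm (Fin n)) : ℂ) *
      (∑ s : Fin r → Fin n, ∑ σ : Equiv.Perm (Fin n), F (deck (List.ofFn s) σ)) =
      (Fintype.card (Equiv.Perm (Fin n)) : ℂ) *
      ((Fintype.card (Fin r → Fin n) : ℂ) * ∑ π, F π) := by
    calc _ = ∑ ρ : Equiv.Perm (Fin n), ∑ s : Fin r → Fin n, ∑ σ : Equiv.Perm (Fin n),
            F (ρ * deck (List.ofFn s) σ) := by
          simp_rw [← h1]; simp
      _ = ∑ s : Fin r → Fin n, ∑ σ : Equiv.Perm (Fin n), ∑ ρ : Equiv.Perm (Fin n),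
            F (ρ * deck (List.ofFn s) σ) := by
          rw [Finset.sum_comm]
          refine Finset.sum_congr rfl fun s _ => ?_
          rw [Finset.sum_comm]
      _ = ∑ s : Fin r → Fin n, ∑ σ : Equiv.Perm (Fin n), ∑ ρ : Equiv.Perm (Fin n), F ρ := by
          refine Finset.sum_congr rfl fun s _ => Finset.sum_congr rfl fun σ _ => ?_
          exact Equiv.sum_comp (Equiv.mulRight (deck (List.ofFn s) σ)) F
      _ = _ := by
          simp only [Finset.sum_const, Finset.card_univ, nsmul_eq_mul]
          ring
  exact mul_left_cancel₀ (by simp [Fintype.card_ne_zero]) h2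

/-- Insert a new first value. -/
def consPerm {n : ℕ} (q : Fin (n + 1) × Equiv.Perm (Fin n)) : Equiv.Perm (Fin (n + 1)) :=
  (q.1.cycleRange)⁻¹ * Equiv.Perm.decomposeFin.symm (0, q.2)

lemma consPerm_zero {n : ℕ} (q : Fin (n + 1) × Equiv.Perm (Fin n)) : consPerm q 0 = q.1 := by
  simp [consPerm, Equiv.Perm.mul_apply]

lemma consPerm_succ {n : ℕ} (q : Fin (n + 1) × Equiv.Perm (Fin n)) (i : Fin n) :
    consPerm q i.succ = q.1.succAbove (q.2 i) := by
  simp [consPerm, Equiv.Perm.mul_apply]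

lemma consPerm_bij {n : ℕ} : Function.Bijective (consPerm (n := n)) := by
  rw [Fintype.bijective_iff_injective_and_card]
  constructor
  · rintro ⟨p, e⟩ ⟨p', e'⟩ h
    have h0 : p = p' := by
      have := congrArg (fun π => π 0) h
      simpa [consPerm_zero] using this
    subst h0
    have : e = e' := by
      ext1 i
      have := congrArg (fun π => π i.succ) h
      simpa [consPerm_succ] using this
    rw [this]
  · simp [Fintype.card_perm, Nat.factorial_succ]

lemma inv_sum {n : ℕ} (π : Equiv.Perm (Fin n)) :
    inversionCount π = ∑ i, ∑ j, if i < j ∧ π j < π i then 1 else 0 := by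
  rw [inversionCount, Finset.card_filter, ← Finset.univ_product_univ, Finset.sum_product]

lemma inv_consPerm {n : ℕ} (q : Fin (n + 1) × Equiv.Perm (Fin n)) :
    inversionCount (consPerm q) = q.1 + inversionCount q.2 := by
  rw [inv_sum, inv_sum, Fin.sum_univ_succ]
  congr 1
  · simp only [Fin.sum_univ_succ, consPerm_zero, consPerm_succ]
    simp only [lt_self_iff_false, false_and, if_false, zero_add, Fin.succ_pos, true_and]
    rw [Equiv.sum_comp q.2 (fun j => if q.1.succAbove j < q.1 then 1 else 0)]
    simp only [Fin.succAbove_lt_iff_castSucc_lt]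
    rw [← Finset.card_filter]
    have : (Finset.univ.filter fun x : Fin n => x.castSucc < q.1) =
        Finset.univ.filter fun x : Fin n => (x : ℕ) < q.1 := by ext x; simp [Fin.lt_def]
    rw [this, Fin.card_filter_val_lt]
    have := q.1.is_lt
    omega
  · refine Finset.sum_congr rfl fun i _ => ?_
    rw [Fin.sum_univ_succ]
    simp [consPerm_succ, Fin.succAbove_lt_succAbove_iff]

lemma gf (z : ℂ) (n : ℕ) :
    ∑ π : Equiv.Perm (Fin n), z ^ inversionCount π =
      ∏ j ∈ Finset.range n, ∑ k ∈ Finset.range (j + 1), z ^ k := by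
  induction n with
  | zero => simp [inversionCount]
  | succ n ih =>
    rw [Finset.prod_range_succ, ← ih, ← (consPerm_bij (n := n)).sum_comp, Fintype.sum_prod_type]
    simp_rw [inv_consPerm, pow_add]
    rw [← Finset.sum_mul_sum, mul_comm, Finset.sum_range]

end RTT

namespace RTT

lemma abs_prod_sub_prod {ι : Type*} (s : Finset ι) (f g : ι → ℝ)
    (hf : ∀ i ∈ s, |f i| ≤ 1) (hg : ∀ i ∈ s, |g i| ≤ 1) :
    |∏ i ∈ s, f i - ∏ i ∈ s, g i| ≤ ∑ i ∈ s, |f i - g i| := by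
  classical
  induction s using Finset.induction_on with
  | empty => simp
  | insert a s ha ih =>
    rw [Finset.prod_insert ha, Finset.prod_insert ha, Finset.sum_insert ha]
    have ih' := ih (fun i hi => hf i (Finset.mem_insert_of_mem hi))
      (fun i hi => hg i (Finset.mem_insert_of_mem hi))
    have hP : |∏ i ∈ s, f i| ≤ 1 := by
      rw [Finset.abs_prod]
      exact Finset.prod_le_one (fun _ _ => abs_nonneg _)
        (fun i hi => hf i (Finset.mem_insert_of_mem hi))
    have hga := hg a (Finset.mem_insert_self a s)
    have e : f a * ∏ i ∈ s, f i - g a * ∏ i ∈ s, g i =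
      (f a - g a) * ∏ i ∈ s, f i + g a * (∏ i ∈ s, f i - ∏ i ∈ s, g i) := by ring
    rw [e]
    refine (abs_add_le _ _).trans ?_
    rw [abs_mul, abs_mul]
    have h1 := mul_le_mul_of_nonneg_left hP (abs_nonneg (f a - g a))
    have h2 := mul_le_mul_of_nonneg_right hga (abs_nonneg (∏ i ∈ s, f i - ∏ i ∈ s, g i))
    linarith

lemma sinc_sub_exp {x : ℝ} (hx : |x| ≤ 1) :
    |Real.sinc x - Real.exp (-(x ^ 2 / 6))| ≤ x ^ 4 := by
  have hx2 : x ^ 2 ≤ 1 := by rw [← sq_abs]; nlinarith [abs_nonneg x]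
  have h1 : |Real.sinc x - (1 - x ^ 2 / 6)| ≤ x ^ 4 / 100 := by
    by_cases h0 : x = 0
    · simp [h0]
    · have hb := Real.sin_bound hx
      rw [Real.sinc_of_ne_zero h0]
      have e : Real.sin x / x - (1 - x ^ 2 / 6) = (Real.sin x - (x - x ^ 3 / 6)) / x := by
        field_simp
      rw [e, abs_div, div_le_iff₀ (abs_pos.2 h0)]
      refine hb.trans (le_of_eq ?_)
      have : x ^ 4 = |x| ^ 4 := by rw [pow_abs, abs_of_nonneg (by positivity)]
      rw [this]; ring
  have h2 := Real.abs_exp_sub_one_sub_id_le (x := -(x ^ 2 / 6))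
    (by rw [abs_neg, abs_of_nonneg (by positivity)]; linarith)
  rw [abs_le] at h1 h2 ⊢
  have : (0 : ℝ) ≤ x ^ 4 := by positivity
  have e2 : (-(x ^ 2 / 6)) ^ 2 = x ^ 4 / 36 := by ring
  rw [e2] at h2
  constructor <;> linarith [h1.1, h1.2, h2.1, h2.2]

lemma tendsto_prod_sinc (a : ℕ → ℕ → ℝ) (C L : ℝ)
    (ha : ∀ n : ℕ, 0 < n → ∀ j ∈ Finset.range n, |a n j| ≤ C / Real.sqrt n)
    (hL : Tendsto (fun n => ∑ j ∈ Finset.range n, a n j ^ 2) atTop (𝓝 L)) :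
    Tendsto (fun n => ∏ j ∈ Finset.range n, Real.sinc (a n j)) atTop
      (𝓝 (Real.exp (-(L / 6)))) := by
  have h1 : Tendsto (fun n => ∏ j ∈ Finset.range n, Real.exp (-(a n j ^ 2 / 6))) atTop
      (𝓝 (Real.exp (-(L / 6)))) := by
    simp_rw [← Real.exp_sum, Finset.sum_neg_distrib, ← Finset.sum_div]
    exact (Real.continuous_exp.tendsto _).comp ((hL.div_const 6).neg)
  have h2 : Tendsto (fun n => ∏ j ∈ Finset.range n, Real.sinc (a n j) -
      ∏ j ∈ Finset.range n, Real.exp (-(a n j ^ 2 / 6))) atTop (𝓝 0) := by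
    have hs : Tendsto (fun n : ℕ => C / Real.sqrt n) atTop (𝓝 0) :=
      (Real.tendsto_sqrt_atTop.comp tendsto_natCast_atTop_atTop).const_div_atTop C
    have hz : Tendsto (fun n : ℕ => C ^ 4 / (n : ℝ)) atTop (𝓝 0) :=
      tendsto_natCast_atTop_atTop.const_div_atTop _
    refine squeeze_zero_norm' ?_ hz
    filter_upwards [eventually_gt_atTop 0, hs.eventually (eventually_le_nhds zero_lt_one)]
      with n hn hn1
    have hnR : (0 : ℝ) < n := by exact_mod_cast hn
    rw [Real.norm_eq_abs]
    refine (abs_prod_sub_prod _ _ _ (fun j _ => Real.abs_sinc_le_one _) (fun j _ => ?_)).trans ?_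
    · rw [abs_of_pos (Real.exp_pos _), Real.exp_le_one_iff]
      have := sq_nonneg (a n j); linarith
    · calc ∑ j ∈ Finset.range n, |Real.sinc (a n j) - Real.exp (-(a n j ^ 2 / 6))|
          ≤ ∑ j ∈ Finset.range n, C ^ 4 / (n : ℝ) ^ 2 := by
            refine Finset.sum_le_sum fun j hj => ?_
            have hb := ha n hn j hj
            refine (sinc_sub_exp (hb.trans hn1)).trans ?_
            have e1 : a n j ^ 4 = |a n j| ^ 4 := by rw [pow_abs, abs_of_nonneg (by positivity)]
            have e2 : (C / Real.sqrt n) ^ 4 = C ^ 4 / (n : ℝ) ^ 2 := by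
              rw [div_pow]
              congr 1
              have := Real.sq_sqrt hnR.le
              calc Real.sqrt n ^ 4 = (Real.sqrt n ^ 2) ^ 2 := by ring
                _ = _ := by rw [this]
            rw [e1, ← e2]
            exact pow_le_pow_left₀ (abs_nonneg _) hb 4
        _ = C ^ 4 / n := by
            rw [Finset.sum_const, Finset.card_range, nsmul_eq_mul]
            field_simp
  have := h2.add h1
  simpa using this

/-- Geometric sums via `sinc`. -/
lemma geom_sinc (θ : ℝ) (m : ℕ) :
    (∑ k ∈ Finset.range (m + 1), Complex.exp (θ * Complex.I) ^ k) * (Real.sinc (θ / 2) : ℂ) =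
      (m + 1 : ℂ) * Complex.exp ((m * θ / 2 : ℝ) * Complex.I) *
        (Real.sinc ((m + 1 : ℕ) * (θ / 2)) : ℂ) := by
  by_cases h0 : θ = 0
  · simp [h0]
  · have hm : ((m + 1 : ℕ) : ℝ) * (θ / 2) ≠ 0 := by positivity
    rw [Real.sinc_of_ne_zero (by positivity), Real.sinc_of_ne_zero hm]
    set w := Complex.exp ((θ / 2 : ℝ) * Complex.I) with hw
    have hw0 : w ≠ 0 := Complex.exp_ne_zero _
    have e1 : Complex.exp (θ * Complex.I) = w ^ 2 := by
      rw [hw, ← Complex.exp_nat_mul]; congr 1; push_cast; ring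
    have e2 : Complex.exp ((m * θ / 2 : ℝ) * Complex.I) = w ^ m := by
      rw [hw, ← Complex.exp_nat_mul]; congr 1; push_cast; ring
    have e3 : (Real.sin (θ / 2) : ℂ) = (w⁻¹ - w) * Complex.I / 2 := by
      rw [Complex.ofReal_sin, Complex.sin, hw, ← Complex.exp_neg]
      congr 4; ring
    have e4 : (Real.sin ((m + 1 : ℕ) * (θ / 2)) : ℂ) =
        ((w ^ (m + 1))⁻¹ - w ^ (m + 1)) * Complex.I / 2 := by
      rw [Complex.ofReal_sin, Complex.sin, hw, ← Complex.exp_nat_mul, ← Complex.exp_neg]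
      congr 4 <;> (push_cast; ring)
    have hg := geom_sum_mul (w ^ 2) (m + 1)
    have hθ : (θ : ℂ) ≠ 0 := by exact_mod_cast h0
    have hm1 : (m + 1 : ℂ) ≠ 0 := by exact_mod_cast Nat.succ_ne_zero m
    rw [Complex.ofReal_div (Real.sin (θ / 2)),
      Complex.ofReal_div (Real.sin ((m + 1 : ℕ) * (θ / 2))), e1, e2, e3, e4]
    push_cast
    set S := ∑ k ∈ Finset.range (m + 1), (w ^ 2) ^ k with hS
    have hg2 : S * (w⁻¹ - w) = w ^ m * ((w ^ (m + 1))⁻¹ - w ^ (m + 1)) := by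
      have a1 : w⁻¹ - w = -(w ^ 2 - 1) * w⁻¹ := by field_simp; ring
      have a2 : w ^ m * ((w ^ (m + 1))⁻¹ - w ^ (m + 1)) = -((w ^ 2) ^ (m + 1) - 1) * w⁻¹ := by
        field_simp
        ring
      rw [a1, a2, ← hg]; ring
    calc S * ((w⁻¹ - w) * Complex.I / 2 / (θ / 2)) = (S * (w⁻¹ - w)) * (Complex.I / θ) := by
          field_simp
      _ = _ := by
          rw [hg2]; field_simp

lemma charProd (θ : ℝ) (n : ℕ) :
    (∑ π : Equiv.Perm (Fin n), Complex.exp (θ * Complex.I) ^ inversionCount π) *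
      (Real.sinc (θ / 2) : ℂ) ^ n =
    (n.factorial : ℂ) * Complex.exp ((n * (n - 1) * θ / 4 : ℝ) * Complex.I) *
      ∏ j ∈ Finset.range n, (Real.sinc ((j + 1 : ℕ) * (θ / 2)) : ℂ) := by
  rw [gf]
  induction n with
  | zero => simp
  | succ n ih =>
    rw [Finset.prod_range_succ, Finset.prod_range_succ, pow_succ, Nat.factorial_succ]
    have e : Complex.exp (((n + 1 : ℕ) * ((n + 1 : ℕ) - 1) * θ / 4 : ℝ) * Complex.I) =
        Complex.exp ((n * (n - 1) * θ / 4 : ℝ) * Complex.I) *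
        Complex.exp ((n * θ / 2 : ℝ) * Complex.I) := by
      rw [← Complex.exp_add]; congr 1; push_cast; ring
    rw [e]
    have hg := geom_sinc θ n
    rw [mul_mul_mul_comm, ih, hg]
    push_cast
    ring

/-- The normalised statistic. -/
noncomputable def X (n : ℕ) (π : Equiv.Perm (Fin n)) : ℝ :=
  ((inversionCount π : ℝ) - (n : ℝ) ^ 2 / 4) / (n : ℝ) ^ ((3 : ℝ) / 2)

lemma rpow_sq {n : ℕ} : ((n : ℝ) ^ ((3 : ℝ) / 2)) ^ 2 = (n : ℝ) ^ 3 := by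
  rw [← Real.rpow_natCast, ← Real.rpow_mul (by positivity), ← Real.rpow_natCast]
  norm_num

lemma rpow_sqrt {n : ℕ} (hn : 0 < n) : (n : ℝ) ^ ((3 : ℝ) / 2) = n * Real.sqrt n := by
  rw [Real.sqrt_eq_rpow, show (3 : ℝ) / 2 = 1 + 1 / 2 by norm_num,
    Real.rpow_add (by exact_mod_cast hn), Real.rpow_one]

lemma sum_sq (n : ℕ) : ∑ j ∈ Finset.range n, ((j + 1 : ℕ) : ℝ) ^ 2 =
    n * (n + 1) * (2 * n + 1) / 6 := by
  induction n with
  | zero => simp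
  | succ n ih => rw [Finset.sum_range_succ, ih]; push_cast; ring

lemma tendsto_inv_nat (c : ℝ) : Tendsto (fun n : ℕ => c / (n : ℝ)) atTop (𝓝 0) :=
  tendsto_natCast_atTop_atTop.const_div_atTop _

lemma tendsto_unif (t : ℝ) :
    Tendsto (fun n : ℕ => (∑ π : Equiv.Perm (Fin n), Complex.exp ((t * X n π : ℝ) * Complex.I)) /
      (n.factorial : ℂ)) atTop (𝓝 ((Real.exp (-(t ^ 2 / 72)) : ℝ) : ℂ)) := by
  set θ : ℕ → ℝ := fun n => t / (n : ℝ) ^ ((3 : ℝ) / 2) with hθ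
  have habs : ∀ n : ℕ, 0 < n → ∀ x : ℝ, 0 ≤ x → x ≤ n → |x * (θ n / 2)| ≤ |t| / Real.sqrt n := by
    intro n hn x hx0 hx
    have hnR : (0 : ℝ) < n := by exact_mod_cast hn
    have hs : 0 < Real.sqrt n := Real.sqrt_pos.2 hnR
    simp only [hθ]
    rw [rpow_sqrt hn, abs_mul, abs_div, abs_div, abs_of_nonneg hx0, abs_of_pos (by positivity : (0 : ℝ) < n * Real.sqrt n)]
    rw [abs_two]
    have : n * (|t| / (n * Real.sqrt n) / 2) = |t| / Real.sqrt n / 2 := by field_simp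
    calc x * (|t| / (n * Real.sqrt n) / 2) ≤ n * (|t| / (n * Real.sqrt n) / 2) := by gcongr
      _ = |t| / Real.sqrt n / 2 := this
      _ ≤ _ := by
        have : 0 ≤ |t| / Real.sqrt n := by positivity
        linarith
  have hnum : Tendsto (fun n : ℕ => ∏ j ∈ Finset.range n, Real.sinc ((j + 1 : ℕ) * (θ n / 2)))
      atTop (𝓝 (Real.exp (-((t ^ 2 / 12) / 6)))) := by
    refine tendsto_prod_sinc (fun n j => (j + 1 : ℕ) * (θ n / 2)) |t| _ ?_ ?_
    · intro n hn j hj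
      refine habs n hn _ (by positivity) ?_
      exact_mod_cast Finset.mem_range.1 hj
    · have hlim : Tendsto (fun n : ℕ => t ^ 2 / 24 * ((1 + 1 / (n : ℝ)) * (2 + 1 / (n : ℝ)))) atTop
          (𝓝 (t ^ 2 / 24 * ((1 + 0) * (2 + 0)))) :=
        (((tendsto_inv_nat 1).const_add 1).mul ((tendsto_inv_nat 1).const_add 2)).const_mul _
      rw [show t ^ 2 / 24 * ((1 + 0) * (2 + 0)) = t ^ 2 / 12 by ring] at hlim
      refine hlim.congr' ?_
      filter_upwards [eventually_gt_atTop 0] with n hn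
      have hnR : (0 : ℝ) < n := by exact_mod_cast hn
      simp_rw [mul_pow, ← Finset.sum_mul]
      rw [sum_sq, div_pow, hθ]
      simp only
      rw [div_pow, rpow_sq]
      field_simp
      ring
  have hden : Tendsto (fun n : ℕ => Real.sinc (θ n / 2) ^ n) atTop (𝓝 1) := by
    have := tendsto_prod_sinc (fun n _ => 1 * (θ n / 2)) |t| 0 ?_ ?_
    · simpa using this
    · intro n hn j hj
      exact habs n hn 1 (by norm_num) (by exact_mod_cast hn)
    · have hlim : Tendsto (fun n : ℕ => t ^ 2 / 4 * ((1 / (n : ℝ)) * (1 / (n : ℝ)))) atTop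
          (𝓝 (t ^ 2 / 4 * (0 * 0))) :=
        ((tendsto_inv_nat 1).mul (tendsto_inv_nat 1)).const_mul _
      rw [show t ^ 2 / 4 * ((0 : ℝ) * 0) = 0 by ring] at hlim
      refine hlim.congr' ?_
      filter_upwards [eventually_gt_atTop 0] with n hn
      have hnR : (0 : ℝ) < n := by exact_mod_cast hn
      rw [Finset.sum_const, Finset.card_range, nsmul_eq_mul, one_mul, div_pow, hθ]
      simp only
      rw [div_pow, rpow_sq]
      field_simp
      try ring
  have hphase : Tendsto (fun n : ℕ => Complex.exp ((-(n * θ n / 4) : ℝ) * Complex.I)) atTop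
      (𝓝 1) := by
    have h1 : Tendsto (fun n : ℕ => -(n * θ n / 4)) atTop (𝓝 0) := by
      have hs : Tendsto (fun n : ℕ => (-t / 4) / Real.sqrt n) atTop (𝓝 0) :=
        (Real.tendsto_sqrt_atTop.comp tendsto_natCast_atTop_atTop).const_div_atTop _
      refine hs.congr' ?_
      filter_upwards [eventually_gt_atTop 0] with n hn
      have hnR : (0 : ℝ) < n := by exact_mod_cast hn
      have hs : 0 < Real.sqrt n := Real.sqrt_pos.2 hnR
      simp only [hθ]
      rw [rpow_sqrt hn]
      field_simp
    have hc : Continuous (fun x : ℝ => Complex.exp ((x : ℂ) * Complex.I)) := by fun_prop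
    have := (hc.tendsto 0).comp h1
    simpa [Function.comp_def] using this
  have hnumC := (Complex.continuous_ofReal.tendsto _).comp hnum
  have hdenC := (Complex.continuous_ofReal.tendsto _).comp hden
  have hall := (hphase.mul hnumC).div hdenC (by simp)
  rw [show (t ^ 2 / 12) / 6 = t ^ 2 / 72 by ring] at hall
  simp only [one_mul, Complex.ofReal_one, div_one] at hall
  refine hall.congr' ?_
  filter_upwards [hden.eventually (eventually_ne_nhds one_ne_zero), eventually_gt_atTop 0]
    with n hn hn0
  have hnR : (0 : ℝ) < n := by exact_mod_cast hn0
  have hne : (Real.sinc (θ n / 2) : ℂ) ^ n ≠ 0 := by exact_mod_cast hn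
  have hf : (n.factorial : ℂ) ≠ 0 := by exact_mod_cast n.factorial_ne_zero
  have hch := charProd (θ n) n
  have hS : ∑ π : Equiv.Perm (Fin n), Complex.exp ((t * X n π : ℝ) * Complex.I) =
      Complex.exp ((-((n : ℝ) ^ 2 * θ n / 4) : ℝ) * Complex.I) *
      ∑ π : Equiv.Perm (Fin n), Complex.exp (θ n * Complex.I) ^ inversionCount π := by
    rw [Finset.mul_sum]
    refine Finset.sum_congr rfl fun π _ => ?_
    rw [← Complex.exp_nat_mul, ← Complex.exp_add]
    congr 1
    have : t * X n π = -((n : ℝ) ^ 2 * θ n / 4) + inversionCount π * θ n := by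
      simp only [X, hθ]; ring
    rw [this]; push_cast; ring
  have hE : Complex.exp ((-(n * θ n / 4) : ℝ) * Complex.I) =
      Complex.exp ((-((n : ℝ) ^ 2 * θ n / 4) : ℝ) * Complex.I) *
      Complex.exp ((n * (n - 1) * θ n / 4 : ℝ) * Complex.I) := by
    rw [← Complex.exp_add]; congr 1; push_cast; ring
  simp only [Pi.div_apply, Function.comp_apply]
  rw [hS]
  push_cast at hch hne ⊢
  rw [div_eq_div_iff hne hf]
  push_cast at hE
  rw [hE]
  linear_combination (-Complex.exp (-((n : ℂ) ^ 2 * θ n / 4) * Complex.I)) * hch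

end RTT

namespace RTT

open Classical in
lemma count_avoid (n r : ℕ) (T : Finset (Fin n)) (hn : 0 < n) :
    (∑ s : Fin r → Fin n, if (∀ i, s i ∉ T) then (1 : ℝ) else 0) ≤
      (n : ℝ) ^ r * Real.exp (-(T.card * r / n)) := by
  have hnR : (0 : ℝ) < n := by exact_mod_cast hn
  rw [← Finset.sum_filter, Finset.sum_const, nsmul_eq_mul, mul_one]
  have h1 : (Finset.univ.filter fun s : Fin r → Fin n => ∀ i, s i ∉ T) =
      Fintype.piFinset fun _ => Tᶜ := by
    ext s; simp
  rw [h1, Fintype.card_piFinset_const, Finset.card_compl, Fintype.card_fin]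
  have hT : T.card ≤ n := by simpa using Finset.card_le_univ T
  rw [Nat.cast_pow, Nat.cast_sub hT]
  have h2 : (n : ℝ) - T.card ≤ n * Real.exp (-(T.card / n)) := by
    have := Real.add_one_le_exp (-((T.card : ℝ) / n))
    calc (n : ℝ) - T.card = n * (-((T.card : ℝ) / n) + 1) := by field_simp; ring
      _ ≤ _ := by gcongr
  have h0 : (0 : ℝ) ≤ n - T.card := by
    have : (T.card : ℝ) ≤ n := by exact_mod_cast hT
    linarith
  refine (pow_le_pow_left₀ h0 h2 r).trans (le_of_eq ?_)
  rw [mul_pow, ← Real.exp_nat_mul]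
  congr 2
  ring

open Classical in
lemma sum_missing (n r : ℕ) (hn : 0 < n) :
    ∑ s : Fin r → Fin n, (missing (List.ofFn s) : ℝ) ^ 2 ≤
      (n : ℝ) ^ r * (n * Real.exp (-(r / n)) + (n : ℝ) ^ 2 * Real.exp (-(2 * r / n))) := by
  have h1 : ∀ s : Fin r → Fin n, (missing (List.ofFn s) : ℝ) ^ 2 =
      ∑ a : Fin n, ∑ b : Fin n, if (∀ i, s i ∉ ({a, b} : Finset (Fin n))) then (1 : ℝ) else 0 := by
    intro s
    rw [missing, Finset.card_filter, pow_two]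
    push_cast
    rw [Finset.sum_mul_sum]
    refine Finset.sum_congr rfl fun a _ => Finset.sum_congr rfl fun b _ => ?_
    rw [ite_zero_mul_ite_zero, mul_one]
    refine if_congr ?_ rfl rfl
    simp only [List.mem_ofFn, Set.mem_range, not_exists, Finset.mem_insert, Finset.mem_singleton,
      not_or]
    exact forall_and.symm
  simp_rw [h1]
  rw [Finset.sum_comm]
  simp_rw [Finset.sum_comm (s := (Finset.univ : Finset (Fin r → Fin n)))]
  have hp : (0 : ℝ) ≤ (n : ℝ) ^ r := by positivity
  calc _ ≤ ∑ a : Fin n, ∑ b : Fin n, (n : ℝ) ^ r *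
        ((if a = b then Real.exp (-(r / n)) else 0) + Real.exp (-(2 * r / n))) := by
        refine Finset.sum_le_sum fun a _ => Finset.sum_le_sum fun b _ => ?_
        refine (count_avoid n r {a, b} hn).trans ?_
        refine mul_le_mul_of_nonneg_left ?_ hp
        split_ifs with hab
        · subst hab
          have := Real.exp_pos (-(2 * (r : ℝ) / n))
          simp only [Finset.pair_eq_singleton, Finset.card_singleton, Nat.cast_one, one_mul]
          linarith
        · rw [Finset.card_pair hab]
          simp
    _ = _ := by
        simp_rw [← Finset.mul_sum, Finset.sum_add_distrib]
        simp only [Finset.sum_ite_eq, Finset.mem_univ, if_true, Finset.sum_const,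
          Finset.card_univ, Fintype.card_fin, nsmul_eq_mul]
        ring

lemma small (n r : ℕ) (c : ℝ) (hn : 0 < n)
    (hr : (n : ℝ) * Real.log n / 4 + c * n ≤ (r : ℝ)) :
    n * Real.exp (-(r / n)) + (n : ℝ) ^ 2 * Real.exp (-(2 * r / n)) ≤
      (n : ℝ) ^ ((3 : ℝ) / 2) * (Real.exp (-c) + Real.exp (-c) ^ 2) := by
  have hnR : (0 : ℝ) < n := by exact_mod_cast hn
  have hlog : 0 ≤ Real.log n := Real.log_nonneg (by exact_mod_cast hn)
  have h1 : Real.log n / 4 + c ≤ r / n := by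
    rw [le_div_iff₀ hnR]; linarith
  have e : (n : ℝ) ^ ((3 : ℝ) / 2) = Real.exp (Real.log n * (3 / 2)) := Real.rpow_def_of_pos hnR _
  have en : (n : ℝ) = Real.exp (Real.log n) := (Real.exp_log hnR).symm
  have t1 : n * Real.exp (-(r / n)) ≤ (n : ℝ) ^ ((3 : ℝ) / 2) * Real.exp (-c) := by
    rw [e]
    calc (n : ℝ) * Real.exp (-(r / n)) = Real.exp (Real.log n) * Real.exp (-(r / n)) := by
          rw [← en]
      _ ≤ _ := by
          rw [← Real.exp_add, ← Real.exp_add]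
          apply Real.exp_le_exp.2
          linarith
  have t2 : (n : ℝ) ^ 2 * Real.exp (-(2 * r / n)) ≤ (n : ℝ) ^ ((3 : ℝ) / 2) * Real.exp (-c) ^ 2 := by
    rw [e]
    calc (n : ℝ) ^ 2 * Real.exp (-(2 * r / n))
          = Real.exp (Real.log n) ^ 2 * Real.exp (-(2 * r / n)) := by rw [← en]
      _ ≤ _ := by
          rw [← Real.exp_nat_mul, ← Real.exp_nat_mul, ← Real.exp_add, ← Real.exp_add]
          apply Real.exp_le_exp.2
          have : 2 * (r : ℝ) / n = 2 * (r / n) := by ring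
          rw [this]
          push_cast
          linarith
  linarith

lemma exp_lip (x y : ℝ) :
    ‖Complex.exp (x * Complex.I) - Complex.exp (y * Complex.I)‖ ≤ |x - y| := by
  have e : Complex.exp (x * Complex.I) - Complex.exp (y * Complex.I) =
      Complex.exp (y * Complex.I) * (Complex.exp (Complex.I * ((x - y : ℝ) : ℂ)) - 1) := by
    rw [mul_sub, ← Complex.exp_add, mul_one]
    congr 2
    push_cast; ring
  rw [e, norm_mul, Complex.norm_exp_ofReal_mul_I, one_mul]
  exact Real.norm_exp_I_mul_ofReal_sub_one_le

lemma char_diff (n r : ℕ) (c t : ℝ) (hn : 0 < n)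
    (hr : (n : ℝ) * Real.log n / 4 + c * n ≤ (r : ℝ)) :
    ‖(∑ s : Fin r → Fin n, Complex.exp ((t * X n (rttPerm n r s) : ℝ) * Complex.I)) /
        (Fintype.card (Fin r → Fin n) : ℂ) -
      (∑ π : Equiv.Perm (Fin n), Complex.exp ((t * X n π : ℝ) * Complex.I)) / (n.factorial : ℂ)‖
      ≤ |t| * (Real.exp (-c) + Real.exp (-c) ^ 2) := by
  have hnR : (0 : ℝ) < n := by exact_mod_cast hn
  set F : Equiv.Perm (Fin n) → ℂ := fun π => Complex.exp ((t * X n π : ℝ) * Complex.I) with hF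
  have hsum := sum_deck n r F
  set B : ℝ := (n : ℝ) ^ ((3 : ℝ) / 2) with hB
  have hBpos : 0 < B := by positivity
  have hN : (0 : ℝ) < (n : ℝ) ^ r := by positivity
  have hf : (0 : ℝ) < (n.factorial : ℝ) := by exact_mod_cast n.factorial_pos
  have hcard : (Fintype.card (Fin r → Fin n) : ℂ) = ((n : ℝ) ^ r : ℝ) := by simp
  have hNC : (((n : ℝ) ^ r : ℝ) : ℂ) ≠ 0 := by exact_mod_cast hN.ne'
  have hfC : (n.factorial : ℂ) ≠ 0 := by exact_mod_cast hf.ne'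
  rw [hcard] at hsum ⊢
  have hrt : ∀ s : Fin r → Fin n, rttPerm n r s = deck (List.ofFn s) 1 := fun s => rfl
  have e : (∑ s : Fin r → Fin n, F (rttPerm n r s)) / (((n : ℝ) ^ r : ℝ) : ℂ) -
      (∑ π, F π) / (n.factorial : ℂ) =
      (∑ s : Fin r → Fin n, ∑ σ : Equiv.Perm (Fin n),
        (F (deck (List.ofFn s) 1) - F (deck (List.ofFn s) σ))) /
        ((((n : ℝ) ^ r : ℝ) : ℂ) * (n.factorial : ℂ)) := by
    simp_rw [Finset.sum_sub_distrib]
    rw [hsum]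
    simp only [Finset.sum_const, Finset.card_univ, Fintype.card_perm, Fintype.card_fin,
      nsmul_eq_mul, ← Finset.mul_sum, hrt]
    field_simp
  change ‖(∑ s : Fin r → Fin n, F (rttPerm n r s)) / (((n : ℝ) ^ r : ℝ) : ℂ) -
      (∑ π, F π) / (n.factorial : ℂ)‖ ≤ _
  rw [e, norm_div, norm_mul, Complex.norm_natCast, Complex.norm_real, Real.norm_eq_abs,
    abs_of_pos hN, div_le_iff₀ (by positivity)]
  calc _ ≤ ∑ s : Fin r → Fin n, ∑ σ : Equiv.Perm (Fin n),
        |t| / B * (missing (List.ofFn s) : ℝ) ^ 2 := by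
        refine (norm_sum_le _ _).trans (Finset.sum_le_sum fun s _ => ?_)
        refine (norm_sum_le _ _).trans (Finset.sum_le_sum fun σ _ => ?_)
        refine (exp_lip _ _).trans ?_
        have hi := inv_abs (List.ofFn s) 1 σ
        have : t * X n (deck (List.ofFn s) 1) - t * X n (deck (List.ofFn s) σ) =
          t / B * ((inversionCount (deck (List.ofFn s) 1) : ℝ) -
            inversionCount (deck (List.ofFn s) σ)) := by
          simp only [X, ← hB]; ring
        rw [this, abs_mul, abs_div, abs_of_pos hBpos]
        gcongr
    _ = n.factorial * (|t| / B) * ∑ s : Fin r → Fin n, (missing (List.ofFn s) : ℝ) ^ 2 := by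
        simp only [Finset.sum_const, Finset.card_univ, Fintype.card_perm, Fintype.card_fin,
          nsmul_eq_mul, ← Finset.mul_sum]
        ring
    _ ≤ n.factorial * (|t| / B) * ((n : ℝ) ^ r * (B * (Real.exp (-c) + Real.exp (-c) ^ 2))) := by
        have h1 := sum_missing n r hn
        have h2 := small n r c hn hr
        have h3 := h1.trans (mul_le_mul_of_nonneg_left h2 hN.le)
        exact mul_le_mul_of_nonneg_left h3 (by positivity)
    _ = _ := by field_simp

/-- Law of a function on a finite uniform space. -/
noncomputable def law {α : Type*} [Fintype α] (f : α → ℝ) : Measure ℝ :=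
  ENNReal.ofReal ((Fintype.card α : ℝ)⁻¹) • ∑ x, Measure.dirac (f x)

lemma law_prob {α : Type*} [Fintype α] [Nonempty α] (f : α → ℝ) :
    IsProbabilityMeasure (law f) := by
  constructor
  have h : (0 : ℝ) < Fintype.card α := by exact_mod_cast Fintype.card_pos
  simp only [law, Measure.smul_apply, Measure.finsetSum_apply, measure_univ, Finset.sum_const,
    Finset.card_univ, nsmul_eq_mul, mul_one, smul_eq_mul]
  rw [← ENNReal.ofReal_natCast, ← ENNReal.ofReal_mul (by positivity), inv_mul_cancel₀ h.ne',
    ENNReal.ofReal_one]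

lemma integral_law {α E : Type*} [Fintype α] [NormedAddCommGroup E] [NormedSpace ℝ E]
    [CompleteSpace E] (f : α → ℝ) (g : ℝ → E) :
    ∫ x, g x ∂(law f) = ((Fintype.card α : ℝ)⁻¹) • ∑ x, g (f x) := by
  rw [law, integral_smul_measure, integral_finsetSum_measure]
  · simp
  · intro i _
    exact integrable_dirac (by simp)

end RTT

/-- **Theorem (inversions, mixed regime).** If `(r n)` are positive integers with
`r n ≥ (n log n)/4 + cₙ n` for some sequence `cₙ → ∞`, then `(I - n²/4)/n^{3/2}` converges
in distribution (tested against every bounded continuous function) to `N(0, 1/36)`. -/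
theorem rtt_inversions_mixed (r : ℕ → ℕ) (hrpos : ∀ n, 0 < r n) (cseq : ℕ → ℝ)
    (hcseq : Tendsto cseq atTop atTop)
    (hr : ∀ n : ℕ, (n : ℝ) * Real.log n / 4 + cseq n * n ≤ (r n : ℝ)) :
    ∀ g : BoundedContinuousFunction ℝ ℝ,
      Tendsto
        (fun n : ℕ =>
          unifExpect (fun s : Fin (r n) → Fin n =>
            g (((inversionCount (rttPerm n (r n) s) : ℝ) - (n : ℝ) ^ 2 / 4) /
              (n : ℝ) ^ ((3 : ℝ) / 2))))
        atTop
        (𝓝 (∫ x, g x ∂(gaussianReal 0 (1 / 36 : ℝ≥0)))) := by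
  intro g
  rw [← tendsto_add_atTop_iff_nat 1]
  let f : (n : ℕ) → (Fin (r (n + 1)) → Fin (n + 1)) → ℝ :=
    fun n s => RTT.X (n + 1) (rttPerm (n + 1) (r (n + 1)) s)
  let μ : ℕ → ProbabilityMeasure ℝ := fun n => ⟨RTT.law (f n), RTT.law_prob (f n)⟩
  let ν : ProbabilityMeasure ℝ := ⟨gaussianReal 0 (1 / 36 : ℝ≥0), inferInstance⟩
  have hconv : Tendsto μ atTop (𝓝 ν) := by
    rw [ProbabilityMeasure.tendsto_iff_tendsto_charFun]
    intro t
    have hG : charFun (ν : Measure ℝ) t = ((Real.exp (-(t ^ 2 / 72)) : ℝ) : ℂ) := by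
      change charFun (gaussianReal 0 (1 / 36 : ℝ≥0)) t = _
      rw [charFun_gaussianReal, Complex.ofReal_exp]
      congr 1
      push_cast
      ring
    rw [hG]
    have hF : ∀ n, charFun (μ n : Measure ℝ) t =
        (∑ s : Fin (r (n + 1)) → Fin (n + 1),
          Complex.exp ((t * RTT.X (n + 1) (rttPerm (n + 1) (r (n + 1)) s) : ℝ) * Complex.I)) /
        (Fintype.card (Fin (r (n + 1)) → Fin (n + 1)) : ℂ) := by
      intro n
      change charFun (RTT.law (f n)) t = _
      rw [charFun_apply_real, RTT.integral_law, Complex.real_smul, div_eq_inv_mul]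
      push_cast
      rfl
    simp_rw [hF]
    have hun := (tendsto_add_atTop_iff_nat 1).2 (RTT.tendsto_unif t)
    have hc : Tendsto (fun n : ℕ => Real.exp (-cseq (n + 1))) atTop (𝓝 0) :=
      Real.tendsto_exp_neg_atTop_nhds_zero.comp ((tendsto_add_atTop_iff_nat 1).2 hcseq)
    have hb : Tendsto (fun n : ℕ => |t| * (Real.exp (-cseq (n + 1)) +
        Real.exp (-cseq (n + 1)) ^ 2)) atTop (𝓝 0) := by
      have := (hc.add (hc.pow 2)).const_mul |t|
      simpa using this
    have hd := squeeze_zero_norm (fun n : ℕ =>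
      RTT.char_diff (n + 1) (r (n + 1)) (cseq (n + 1)) t n.succ_pos (hr (n + 1))) hb
    have := hd.add hun
    simpa using this
  have hfin := (ProbabilityMeasure.tendsto_iff_forall_integral_tendsto.1 hconv) g
  refine hfin.congr fun n => ?_
  change ∫ x, g x ∂(RTT.law (f n)) = _
  rw [RTT.integral_law, unifExpect, smul_eq_mul, div_eq_inv_mul]
  rfl
end

section
/- Fix a constant c > 0, and for each n let K^{⌊cn⌋}_n be the number of distinct values taken by ⌊cn⌋ independent uniform random samples from [n]. Then (K^{⌊cn⌋}_n − n(1 − e^{−c})) / √(n(e^{−c} − (1+c)e^{−2c})) converges in distribution, as n → ∞, to a standard normal random variable. -/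
open MeasureTheory ProbabilityTheory Filter Finset Topology
open scoped NNReal

lemma sum_supersets (n : ℕ) (z : ℂ) (S : Finset (Fin n)) :
    ∑ T : Finset (Fin n), (if S ⊆ T then z ^ #T * (1 - z) ^ (n - #T) else 0) = z ^ #S := by
  classical
  have h := Finset.prod_add (fun _ : Fin n => z) (fun i => if i ∈ S then 0 else 1 - z) univ
  have h1 : ∏ i : Fin n, (z + if i ∈ S then 0 else 1 - z) = z ^ #S := by
    have : ∀ i : Fin n, (z + if i ∈ S then 0 else 1 - z) = if i ∈ S then z else 1 := by
      intro i; split_ifs <;> ring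
    simp [this]
  rw [← h1, h, Finset.powerset_univ]
  refine Finset.sum_congr rfl fun T _ => ?_
  split_ifs with hS
  · rw [Finset.prod_const]
    congr 1
    rw [Finset.prod_congr rfl (g := fun _ => 1 - z)]
    · rw [Finset.prod_const, Finset.card_sdiff_of_subset (subset_univ _)]; simp
    · intro i hi
      have : i ∉ S := fun h => (Finset.mem_sdiff.1 hi).2 (hS h)
      simp [this]
  · obtain ⟨i, hi, hT⟩ := Finset.not_subset.1 hS
    symm
    apply mul_eq_zero_of_right
    apply Finset.prod_eq_zero (i := i) (by simp [hT]) (by simp [hi])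

lemma sum_pow_distinct (n r : ℕ) (z : ℂ) :
    ∑ s : Fin r → Fin n, z ^ distinctCount n r s =
      ∑ T : Finset (Fin n), z ^ #T * (1 - z) ^ (n - #T) * (#T : ℂ) ^ r := by
  classical
  have h0 : ∀ s : Fin r → Fin n, z ^ distinctCount n r s =
      ∑ T : Finset (Fin n), (if univ.image s ⊆ T then z ^ #T * (1 - z) ^ (n - #T) else 0) :=
    fun s => (sum_supersets n z _).symm
  rw [Finset.sum_congr rfl fun s _ => h0 s]
  rw [Finset.sum_comm]
  refine Finset.sum_congr rfl fun T _ => ?_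
  rw [← Finset.sum_filter, Finset.sum_const]
  have : (univ.filter fun s : Fin r → Fin n => univ.image s ⊆ T) =
      Fintype.piFinset (fun _ : Fin r => T) := by
    ext s; simp [Finset.image_subset_iff]
  rw [this, Fintype.card_piFinset_const]
  simp [mul_comm]

lemma fourier_exp (a : ℂ) (r : ℕ) :
    ∫ φ in (-Real.pi)..Real.pi, Complex.exp (a * Complex.exp (φ * Complex.I)) *
      Complex.exp (-(r * φ * Complex.I)) = 2 * Real.pi * (a ^ r / r.factorial) := by
  induction r with
  | zero =>
    have h := DiffContOnCl.circleAverage (f := fun w : ℂ => Complex.exp (a * w)) (c := 0)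
      (R := 1) (Differentiable.diffContOnCl (by fun_prop))
    rw [Real.circleAverage_def] at h
    have hp : Function.Periodic (fun φ : ℝ => Complex.exp (a * Complex.exp (φ * Complex.I)))
        (2 * Real.pi) := by
      intro φ
      simp only [Complex.ofReal_add, add_mul, Complex.exp_add]
      simp [Complex.exp_two_pi_mul_I]
    have h2 := hp.intervalIntegral_add_eq 0 (-Real.pi)
    rw [show -Real.pi + 2 * Real.pi = Real.pi by ring, zero_add] at h2
    simp only [circleMap, Complex.ofReal_one, one_mul, zero_add, mul_zero, Complex.exp_zero] at h
    rw [h2] at h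
    simp only [Nat.cast_zero, zero_mul, neg_zero, Complex.exp_zero, mul_one, pow_zero,
      Nat.factorial_zero, Nat.cast_one, div_one]
    rw [Complex.real_smul] at h
    push_cast at h
    have hpi : (Real.pi : ℂ) ≠ 0 := by exact_mod_cast Real.pi_ne_zero
    field_simp at h
    rw [h]
  | succ r ih =>
    have hd : ∀ φ : ℝ, HasDerivAt (fun φ : ℝ => Complex.exp (a * Complex.exp (φ * Complex.I)) *
        Complex.exp (-((r + 1 : ℕ) * φ * Complex.I)))
        (Complex.I * (a * (Complex.exp (a * Complex.exp (φ * Complex.I)) *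
          Complex.exp (-(r * φ * Complex.I))) -
          (r + 1 : ℕ) * (Complex.exp (a * Complex.exp (φ * Complex.I)) *
        Complex.exp (-((r + 1 : ℕ) * φ * Complex.I))))) φ := by
      intro φ
      have h0 : HasDerivAt (fun φ : ℝ => (φ : ℂ)) 1 φ := Complex.ofRealCLM.hasDerivAt
      have h1 := (((h0.mul_const Complex.I).cexp).const_mul a).cexp
      have h2 := (((h0.const_mul ((r + 1 : ℕ) : ℂ)).mul_const Complex.I).fun_neg).cexp
      refine (h1.mul h2).congr_deriv ?_
      have : Complex.exp (-(r * φ * Complex.I)) =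
        Complex.exp (-((r + 1 : ℕ) * φ * Complex.I)) * Complex.exp (φ * Complex.I) := by
        rw [← Complex.exp_add]; push_cast; ring_nf
      rw [this]; ring
    have key := intervalIntegral.integral_eq_sub_of_hasDerivAt (a := -Real.pi) (b := Real.pi)
      (fun φ _ => hd φ) (Continuous.intervalIntegrable (by fun_prop) _ _)
    have hend : Complex.exp (a * Complex.exp ((Real.pi : ℝ) * Complex.I)) *
        Complex.exp (-((r + 1 : ℕ) * (Real.pi : ℝ) * Complex.I)) -
        Complex.exp (a * Complex.exp ((-Real.pi : ℝ) * Complex.I)) *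
        Complex.exp (-((r + 1 : ℕ) * (-Real.pi : ℝ) * Complex.I)) = 0 := by
      have e1 : Complex.exp ((-Real.pi : ℝ) * Complex.I) = Complex.exp ((Real.pi : ℝ) * Complex.I) := by
        rw [Complex.exp_eq_exp_iff_exists_int]; exact ⟨-1, by push_cast; ring⟩
      have e2 : Complex.exp (-((r + 1 : ℕ) * (-Real.pi : ℝ) * Complex.I)) =
        Complex.exp (-((r + 1 : ℕ) * (Real.pi : ℝ) * Complex.I)) := by
        rw [Complex.exp_eq_exp_iff_exists_int]; exact ⟨r + 1, by push_cast; ring⟩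
      rw [e1, e2, sub_self]
    rw [hend, intervalIntegral.integral_const_mul, intervalIntegral.integral_sub
      (Continuous.intervalIntegrable (by fun_prop) _ _)
      (Continuous.intervalIntegrable (by fun_prop) _ _),
      intervalIntegral.integral_const_mul, intervalIntegral.integral_const_mul, ih] at key
    have k2 := (mul_eq_zero.1 key).resolve_left Complex.I_ne_zero
    have hr : ((r + 1 : ℕ) : ℂ) ≠ 0 := by exact_mod_cast Nat.succ_ne_zero r
    have hf : (r.factorial : ℂ) ≠ 0 := by exact_mod_cast r.factorial_ne_zero
    apply mul_left_cancel₀ hr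
    rw [← sub_eq_zero.1 k2, Nat.factorial_succ, pow_succ]
    push_cast at hr ⊢
    field_simp

noncomputable def Psi (c : ℝ) (z : ℂ) (φ : ℝ) : ℂ :=
  z * Complex.exp (c * Complex.exp (φ * Complex.I)) + (1 - z)

lemma integral_Psi (c : ℝ) (n r : ℕ) (z : ℂ) :
    ∫ φ in (-Real.pi)..Real.pi, Psi c z φ ^ n * Complex.exp (-(r * φ * Complex.I)) =
      (2 * Real.pi * ((c : ℂ) ^ r / r.factorial)) * ∑ s : Fin r → Fin n, z ^ distinctCount n r s := by
  rw [sum_pow_distinct]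
  have : ∀ φ : ℝ, Psi c z φ ^ n * Complex.exp (-(r * φ * Complex.I)) =
      ∑ T : Finset (Fin n), (z ^ #T * (1 - z) ^ (n - #T)) *
        (Complex.exp ((#T * c) * Complex.exp (φ * Complex.I)) *
          Complex.exp (-(r * φ * Complex.I))) := by
    intro φ
    rw [Psi, ← Fin.sum_pow_mul_eq_add_pow, Finset.sum_mul]
    refine Finset.sum_congr rfl fun T _ => ?_
    rw [mul_pow, ← Complex.exp_nat_mul]
    ring_nf
  simp_rw [this]
  rw [intervalIntegral.integral_finsetSum
    (fun T _ => Continuous.intervalIntegrable (by fun_prop) _ _), Finset.mul_sum]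
  refine Finset.sum_congr rfl fun T _ => ?_
  rw [intervalIntegral.integral_const_mul, fourier_exp]
  ring

lemma Psi_bound (c : ℝ) (hc : 0 < c) : ∃ δ > 0, ∀ (z : ℂ) (φ : ℝ), ‖z‖ = 1 → |φ| ≤ Real.pi →
    ‖(Real.exp (-c) : ℂ) * Psi c z φ‖ ≤ Real.exp (-δ * φ ^ 2) := by
  set A := c + c ^ 2 / 2 with hA
  have hApos : 0 < A := by positivity
  refine ⟨Real.exp (-c) * (c ^ 3 / (2 * A) * (2 / Real.pi ^ 2)), by positivity, ?_⟩
  intro z φ hz hφ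
  set w : ℂ := c * Complex.exp (φ * Complex.I) with hw
  have hwn : ‖w‖ = c := by
    rw [hw, norm_mul, Complex.norm_exp_ofReal_mul_I, Complex.norm_real]; simp [abs_of_pos hc]
  have h3 := Complex.norm_exp_sub_sum_le_exp_norm_sub_sum w 3
  rw [hwn] at h3
  simp only [Finset.sum_range_succ, Finset.sum_range_zero, Nat.factorial] at h3
  norm_num at h3
  set B := ‖w + w ^ 2 / 2‖ with hB
  have hB2 : B ^ 2 = A ^ 2 - c ^ 3 * (1 - Real.cos φ) := by
    have : w + w ^ 2 / 2 = Complex.exp (φ * Complex.I) * (c + c ^ 2 / 2 * Complex.exp (φ * Complex.I)) := by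
      rw [hw]; ring
    rw [hB, this, norm_mul, Complex.norm_exp_ofReal_mul_I, one_mul, Complex.sq_norm,
      Complex.normSq_apply]
    have h1 : ((c : ℂ) ^ 2 / 2) = ((c ^ 2 / 2 : ℝ) : ℂ) := by push_cast; ring
    rw [h1]
    simp only [Complex.add_re, Complex.add_im, Complex.re_ofReal_mul, Complex.im_ofReal_mul,
      Complex.exp_ofReal_mul_I_re, Complex.exp_ofReal_mul_I_im, Complex.ofReal_re, Complex.ofReal_im]
    rw [hA]
    linear_combination (c ^ 4 / 4) * Real.sin_sq_add_cos_sq φ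
  have hcos := Real.cos_le_one_sub_mul_cos_sq hφ
  have hBA : B ≤ A := by
    apply le_of_sq_le_sq _ hApos.le
    rw [hB2]; have := Real.cos_le_one φ
    nlinarith [pow_pos hc 3]
  have hdiff : c ^ 3 / (2 * A) * (2 / Real.pi ^ 2) * φ ^ 2 ≤ A - B := by
    have h1 : c ^ 3 * (1 - Real.cos φ) = (A - B) * (A + B) := by linear_combination hB2
    have h2 : c ^ 3 * (1 - Real.cos φ) ≤ (A - B) * (2 * A) := by
      rw [h1]; exact mul_le_mul_of_nonneg_left (by linarith) (by linarith)
    have h4 : c ^ 3 * (2 / Real.pi ^ 2 * φ ^ 2) ≤ (A - B) * (2 * A) :=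
      (mul_le_mul_of_nonneg_left (by linarith) (by positivity)).trans h2
    calc _ = c ^ 3 * (2 / Real.pi ^ 2 * φ ^ 2) / (2 * A) := by ring
      _ ≤ _ := by rw [div_le_iff₀ (by positivity)]; exact h4
  have hPsi : ‖Psi c z φ‖ ≤ Real.exp c - (A - B) := by
    have e : Psi c z φ = 1 + z * (w + w ^ 2 / 2) + z * (Complex.exp w - (1 + w + w ^ 2 / 2)) := by
      rw [Psi]; ring
    rw [e]
    refine (norm_add₃_le).trans ?_
    rw [norm_mul, norm_mul, hz, norm_one, one_mul, one_mul]
    linarith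
  rw [norm_mul, Complex.norm_real, Real.norm_of_nonneg (Real.exp_pos _).le]
  calc _ ≤ Real.exp (-c) * (Real.exp c - (A - B)) := by gcongr
    _ = 1 - Real.exp (-c) * (A - B) := by rw [mul_sub, ← Real.exp_add]; simp
    _ ≤ 1 - Real.exp (-c) * (c ^ 3 / (2 * A) * (2 / Real.pi ^ 2) * φ ^ 2) := by gcongr
    _ ≤ _ := by
      refine le_trans (le_of_eq ?_) (Real.add_one_le_exp _)
      ring

lemma taylor_two (f f' : ℝ → ℂ) (a : ℂ) (hf : ∀ t, HasDerivAt f (f' t) t) (h0 : f' 0 = 0)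
    (hf' : HasDerivAt f' a 0) :
    Tendsto (fun t : ℝ => (f t - f 0) / (t : ℂ) ^ 2) (𝓝[≠] 0) (𝓝 (a / 2)) := by
  rw [Metric.tendsto_nhds]
  intro ε hε
  rw [hasDerivAt_iff_isLittleO] at hf'
  have h1 := hf'.def (half_pos hε)
  simp only [h0, sub_zero] at h1
  obtain ⟨d, hd, hball⟩ := Metric.eventually_nhds_iff.1 h1
  filter_upwards [self_mem_nhdsWithin, nhdsWithin_le_nhds (Metric.ball_mem_nhds (0 : ℝ) hd)]
    with t ht htd
  have ht0 : t ≠ 0 := ht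
  have htC : (t : ℂ) ≠ 0 := by exact_mod_cast ht0
  have hder : ∀ x : ℝ, HasDerivAt (fun x : ℝ => f x - a * (x : ℂ) ^ 2 / 2) (f' x - x • a) x := by
    intro x
    have hx : HasDerivAt (fun x : ℝ => (x : ℂ)) 1 x := Complex.ofRealCLM.hasDerivAt
    refine ((hf x).sub (((hx.pow 2).const_mul a).div_const 2)).congr_deriv ?_
    simp; ring
  have hmv := Convex.norm_image_sub_le_of_norm_hasDerivWithin_le (𝕜 := ℝ) (s := Set.uIcc 0 t)
    (f := fun x : ℝ => f x - a * (x : ℂ) ^ 2 / 2) (f' := fun x => f' x - x • a)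
    (C := ε / 2 * |t|) (x := 0) (y := t)
    (fun x _ => (hder x).hasDerivWithinAt) (by
      intro x hx
      have hxt : |x| ≤ |t| := by
        have := Set.abs_sub_left_of_mem_uIcc hx
        simpa using this
      have := hball (y := x) (by
        simp only [Metric.mem_ball, dist_zero_right, Real.norm_eq_abs] at htd ⊢
        exact hxt.trans_lt htd)
      refine this.trans ?_
      rw [Real.norm_eq_abs]
      gcongr) (convex_uIcc 0 t) Set.left_mem_uIcc Set.right_mem_uIcc
  simp only [sub_zero, Complex.ofReal_zero] at hmv
  rw [dist_eq_norm]
  have e : (f t - f 0) / (t : ℂ) ^ 2 - a / 2 =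
      (f t - a * (t : ℂ) ^ 2 / 2 - (f 0 - a * 0 ^ 2 / 2)) / (t : ℂ) ^ 2 := by
    field_simp; ring
  rw [e, norm_div, norm_pow, Complex.norm_real, Real.norm_eq_abs, div_lt_iff₀ (by positivity)]
  refine hmv.trans_lt ?_
  rw [Real.norm_eq_abs]
  have : 0 < |t| := abs_pos.2 ht0
  nlinarith [mul_pos hε (mul_pos this this)]

/-- The centred characteristic function of one Poisson box, along a ray. -/
noncomputable def Fray (c θ u : ℝ) (t : ℝ) : ℂ :=
  Real.exp (-c) * (Complex.exp ((-(θ * (1 - Real.exp (-c)) + c * u) * Complex.I) * t) -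
    Complex.exp (((θ - (θ * (1 - Real.exp (-c)) + c * u)) * Complex.I) * t)) +
  Complex.exp (((θ - (θ * (1 - Real.exp (-c)) + c * u)) * Complex.I) * t +
    c * Complex.exp ((u * Complex.I) * t) - c)

/-- The limiting quadratic form. -/
noncomputable def Qf (c θ u : ℝ) : ℝ :=
  θ ^ 2 * (Real.exp (-c) - Real.exp (-c) ^ 2) + 2 * θ * u * (c * Real.exp (-c)) + c * u ^ 2

lemma hasDerivAt_cexp_mul (α : ℂ) (t : ℝ) :
    HasDerivAt (fun t : ℝ => Complex.exp (α * t)) (α * Complex.exp (α * t)) t := by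
  have h0 : HasDerivAt (fun φ : ℝ => (φ : ℂ)) 1 t := Complex.ofRealCLM.hasDerivAt
  exact (h0.const_mul α).cexp.congr_deriv (by ring)

lemma Fray_taylor (c θ u : ℝ) :
    Tendsto (fun t : ℝ => (Fray c θ u t - Fray c θ u 0) / (t : ℂ) ^ 2) (𝓝[≠] 0)
      (𝓝 ((-Qf c θ u : ℝ) / 2)) := by
  set q : ℂ := (Real.exp (-c) : ℂ) with hq
  set m : ℂ := θ * (1 - q) + c * u with hm
  set α : ℂ := -m * Complex.I with hα
  set β : ℂ := (θ - m) * Complex.I with hβ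
  set v : ℂ := u * Complex.I with hv
  have hF : ∀ t : ℝ, Fray c θ u t = q * (Complex.exp (α * t) - Complex.exp (β * t)) +
    Complex.exp (β * t + c * Complex.exp (v * t) - c) := fun t => rfl
  have hE : ∀ t : ℝ, HasDerivAt (fun t : ℝ => Complex.exp (β * t + c * Complex.exp (v * t) - c))
      ((β + c * v * Complex.exp (v * t)) * Complex.exp (β * t + c * Complex.exp (v * t) - c)) t := by
    intro t
    have h0 : HasDerivAt (fun φ : ℝ => (φ : ℂ)) 1 t := Complex.ofRealCLM.hasDerivAt
    exact (((h0.const_mul β).add ((hasDerivAt_cexp_mul v t).const_mul (c : ℂ))).sub_const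
      (c : ℂ)).cexp.congr_deriv (by simp only [Pi.add_apply]; ring)
  refine taylor_two _ (fun t : ℝ => q * (α * Complex.exp (α * t) - β * Complex.exp (β * t)) +
    (β + c * v * Complex.exp (v * t)) * Complex.exp (β * t + c * Complex.exp (v * t) - c)) _
    ?_ ?_ ?_
  · intro t
    have := (((hasDerivAt_cexp_mul α t).sub (hasDerivAt_cexp_mul β t)).const_mul q).add (hE t)
    exact this
  · simp only [Complex.ofReal_zero, mul_zero, Complex.exp_zero, zero_add, mul_one, sub_self]
    rw [hα, hβ, hv, hm]; ring
  · have h1 := ((((hasDerivAt_cexp_mul α 0).const_mul α).sub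
      ((hasDerivAt_cexp_mul β 0).const_mul β)).const_mul q).add
      ((((hasDerivAt_cexp_mul v 0).const_mul ((c : ℂ) * v)).const_add β).mul (hE 0))
    refine h1.congr_deriv ?_
    simp only [Complex.ofReal_zero, mul_zero, Complex.exp_zero, zero_add, mul_one, sub_self]
    rw [Qf]
    push_cast
    rw [← Complex.ofReal_neg, ← Complex.ofReal_exp, ← hq, hα, hβ, hv, hm]
    ring_nf
    simp only [Complex.I_sq]
    ring

lemma tendsto_inv_sqrt : Tendsto (fun n : ℕ => 1 / √(n : ℝ)) atTop (𝓝[≠] 0) := by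
  rw [tendsto_nhdsWithin_iff]
  constructor
  · simp_rw [one_div]
    exact tendsto_inv_atTop_zero.comp (Real.tendsto_sqrt_atTop.comp tendsto_natCast_atTop_atTop)
  · filter_upwards [eventually_gt_atTop 0] with n hn
    have : 0 < √(n : ℝ) := Real.sqrt_pos.2 (by exact_mod_cast hn)
    simp [this.ne']

lemma Fray_zero (c θ u : ℝ) : Fray c θ u 0 = 1 := by
  simp [Fray]

lemma Fray_pow (c θ u : ℝ) :
    Tendsto (fun n : ℕ => Fray c θ u (1 / √(n : ℝ)) ^ n) atTop
      (𝓝 (Complex.exp ((-Qf c θ u : ℝ) / 2))) := by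
  have h := (Fray_taylor c θ u).comp tendsto_inv_sqrt
  have h2 : Tendsto (fun n : ℕ => (n : ℂ) * (Fray c θ u (1 / √(n : ℝ)) - 1)) atTop
      (𝓝 ((-Qf c θ u : ℝ) / 2)) := by
    refine h.congr' ?_
    filter_upwards [eventually_gt_atTop 0] with n hn
    have hs : (√(n : ℝ) : ℂ) ^ 2 = n := by
      rw [← Complex.ofReal_pow, Real.sq_sqrt (Nat.cast_nonneg n)]; simp
    simp only [Function.comp, Fray_zero]
    push_cast
    rw [div_pow, hs]
    simp [mul_comm]
  simpa using Complex.tendsto_one_add_pow_exp_of_tendsto h2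

/-- Rescaled integrand. -/
noncomputable def Gf (c θ : ℝ) (n : ℕ) (u : ℝ) : ℂ :=
  (Set.Ioc (-(Real.pi * √(n : ℝ))) (Real.pi * √(n : ℝ))).indicator
    (fun u : ℝ => ((Real.exp (-c) : ℂ) * Psi c (Complex.exp ((θ / √(n : ℝ) : ℝ) * Complex.I))
      (u / √(n : ℝ))) ^ n *
      Complex.exp (-(⌊c * (n : ℝ)⌋₊ * (u / √(n : ℝ) : ℝ) * Complex.I)) *
      Complex.exp (-(√(n : ℝ) * (1 - Real.exp (-c)) * θ * Complex.I))) u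

lemma Gf_eq (c θ : ℝ) (n : ℕ) (hn : 0 < n) (u : ℝ)
    (hu : u ∈ Set.Ioc (-(Real.pi * √(n : ℝ))) (Real.pi * √(n : ℝ))) :
    Gf c θ n u = Fray c θ u (1 / √(n : ℝ)) ^ n *
      Complex.exp (((c * n - ⌊c * (n : ℝ)⌋₊) * (1 / √(n : ℝ)) * u : ℝ) * Complex.I) := by
  have hs0 : 0 < √(n : ℝ) := Real.sqrt_pos.2 (by exact_mod_cast hn)
  have hs0' : (√(n : ℝ) : ℂ) ≠ 0 := by exact_mod_cast hs0.ne'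
  have hs : (√(n : ℝ) : ℂ) ^ 2 = n := by
    rw [← Complex.ofReal_pow, Real.sq_sqrt (Nat.cast_nonneg n)]; simp
  have hF : Fray c θ u (1 / √(n : ℝ)) = ((Real.exp (-c) : ℂ) *
      Psi c (Complex.exp ((θ / √(n : ℝ) : ℝ) * Complex.I)) (u / √(n : ℝ))) *
      Complex.exp ((-(θ * (1 - Real.exp (-c)) + c * u) * Complex.I) * (1 / √(n : ℝ) : ℝ)) := by
    have e1 : Complex.exp (((θ - (θ * (1 - Real.exp (-c)) + c * u)) * Complex.I) *
        (1 / √(n : ℝ) : ℝ)) = Complex.exp ((θ / √(n : ℝ) : ℝ) * Complex.I) *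
        Complex.exp ((-(θ * (1 - Real.exp (-c)) + c * u) * Complex.I) * (1 / √(n : ℝ) : ℝ)) := by
      rw [← Complex.exp_add]; congr 1; push_cast; ring
    have e2 : Complex.exp ((u * Complex.I) * (1 / √(n : ℝ) : ℝ)) =
        Complex.exp ((u / √(n : ℝ) : ℝ) * Complex.I) := by
      congr 1; push_cast; ring
    have e3 : Complex.exp (-c) = (Real.exp (-c) : ℂ) := by push_cast; rfl
    rw [Fray, Psi, sub_eq_add_neg (_ + _) (c : ℂ), Complex.exp_add, Complex.exp_add, e1, e2, e3]
    ring
  rw [Gf, Set.indicator_of_mem hu, hF, mul_pow _ (Complex.exp _), ← Complex.exp_nat_mul,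
    mul_assoc (_ ^ n), mul_assoc (_ ^ n)]
  congr 1
  rw [← Complex.exp_add, ← Complex.exp_add]
  congr 1
  push_cast
  field_simp
  rw [← hs]
  ring

lemma Gf_tendsto (c : ℝ) (hc : 0 < c) (θ u : ℝ) :
    Tendsto (fun n : ℕ => Gf c θ n u) atTop (𝓝 (Complex.exp ((-Qf c θ u : ℝ) / 2))) := by
  have hs : Tendsto (fun n : ℕ => √(n : ℝ)) atTop atTop :=
    Real.tendsto_sqrt_atTop.comp tendsto_natCast_atTop_atTop
  have h1 : Tendsto (fun n : ℕ => (c * n - ⌊c * (n : ℝ)⌋₊) * (1 / √(n : ℝ)) * u) atTop (𝓝 0) := by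
    have : Tendsto (fun n : ℕ => (c * n - ⌊c * (n : ℝ)⌋₊) * (1 / √(n : ℝ))) atTop (𝓝 0) := by
      refine squeeze_zero (g := fun n : ℕ => 1 / √(n : ℝ)) ?_ ?_
        (tendsto_nhds_of_tendsto_nhdsWithin tendsto_inv_sqrt)
      · intro n
        have := Nat.floor_le (a := c * n) (by positivity)
        exact mul_nonneg (by linarith) (by positivity)
      · intro n
        have := Nat.lt_floor_add_one (c * (n : ℝ))
        exact mul_le_of_le_one_left (by positivity) (by linarith)
    simpa using this.mul_const u
  have h2 : Tendsto (fun n : ℕ => Complex.exp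
      (((c * n - ⌊c * (n : ℝ)⌋₊) * (1 / √(n : ℝ)) * u : ℝ) * Complex.I)) atTop (𝓝 1) := by
    have hcont : Continuous (fun x : ℝ => Complex.exp (x * Complex.I)) := by fun_prop
    have h5 := (hcont.tendsto 0).comp h1
    simp only [Complex.ofReal_zero, zero_mul, Complex.exp_zero] at h5
    exact h5
  have h3 := (Fray_pow c θ u).mul h2
  rw [mul_one] at h3
  refine h3.congr' ?_
  filter_upwards [eventually_gt_atTop 0, hs.eventually_gt_atTop (|u| / Real.pi)] with n hn hu
  rw [Gf_eq c θ n hn]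
  rw [div_lt_iff₀ Real.pi_pos, mul_comm, abs_lt] at hu
  exact ⟨hu.1, hu.2.le⟩

lemma Gf_measurable (c θ : ℝ) (n : ℕ) : Measurable (Gf c θ n) := by
  unfold Gf
  refine Measurable.indicator ?_ measurableSet_Ioc
  unfold Psi
  fun_prop

lemma Gf_integral_tendsto (c : ℝ) (hc : 0 < c) (θ : ℝ) :
    Tendsto (fun n : ℕ => ∫ u, Gf c θ n u) atTop
      (𝓝 (∫ u, Complex.exp ((-Qf c θ u : ℝ) / 2))) := by
  obtain ⟨δ, hδ, hb⟩ := Psi_bound c hc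
  refine tendsto_integral_of_dominated_convergence (fun u => Real.exp (-δ * u ^ 2))
    (fun n => (Gf_measurable c θ n).aestronglyMeasurable) (integrable_exp_neg_mul_sq hδ) ?_
    (ae_of_all _ fun u => Gf_tendsto c hc θ u)
  intro n
  refine ae_of_all _ fun u => ?_
  by_cases hu : u ∈ Set.Ioc (-(Real.pi * √(n : ℝ))) (Real.pi * √(n : ℝ))
  · have hs0 : 0 < √(n : ℝ) := by
      have := hu.1.trans_le hu.2
      by_contra hcon
      have h0 : √(n : ℝ) = 0 := le_antisymm (not_lt.1 hcon) (Real.sqrt_nonneg _)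
      simp [h0] at this
    have hs : √(n : ℝ) ^ 2 = n := Real.sq_sqrt (Nat.cast_nonneg n)
    have hu' : |u / √(n : ℝ)| ≤ Real.pi := by
      rw [abs_div, abs_of_pos hs0, div_le_iff₀ hs0, abs_le]
      exact ⟨hu.1.le, hu.2⟩
    have e1 : ‖Complex.exp (-(⌊c * (n : ℝ)⌋₊ * (u / √(n : ℝ) : ℝ) * Complex.I))‖ = 1 := by
      rw [show -(⌊c * (n : ℝ)⌋₊ * (u / √(n : ℝ) : ℝ) * Complex.I) =
        ((-(⌊c * (n : ℝ)⌋₊ * (u / √(n : ℝ))) : ℝ) : ℂ) * Complex.I by push_cast; ring]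
      exact Complex.norm_exp_ofReal_mul_I _
    have e2 : ‖Complex.exp (-(√(n : ℝ) * (1 - Real.exp (-c)) * θ * Complex.I))‖ = 1 := by
      rw [show -(√(n : ℝ) * (1 - Real.exp (-c)) * θ * Complex.I) =
        ((-(√(n : ℝ) * (1 - Real.exp (-c)) * θ) : ℝ) : ℂ) * Complex.I by push_cast; ring]
      exact Complex.norm_exp_ofReal_mul_I _
    rw [Gf, Set.indicator_of_mem hu, norm_mul, norm_mul, e1, e2, mul_one, mul_one, norm_pow]
    refine (pow_le_pow_left₀ (norm_nonneg _)
      (hb _ _ (Complex.norm_exp_ofReal_mul_I _) hu') n).trans (le_of_eq ?_)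
    rw [← Real.exp_nat_mul, div_pow, hs]
    congr 1
    have : (n : ℝ) ≠ 0 := by rw [← hs]; positivity
    field_simp
  · rw [Gf, Set.indicator_of_notMem hu]; simpa using (Real.exp_pos _).le

lemma Gf_integral (c θ : ℝ) (n : ℕ) (hn : 0 < n) :
    ∫ u, Gf c θ n u = (√(n : ℝ) * (Real.exp (-c) : ℂ) ^ n *
      (2 * Real.pi * ((c : ℂ) ^ ⌊c * (n : ℝ)⌋₊ / (⌊c * (n : ℝ)⌋₊).factorial))) *
      ∑ s : Fin ⌊c * (n : ℝ)⌋₊ → Fin n, Complex.exp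
        ((θ * (((distinctCount n ⌊c * (n : ℝ)⌋₊ s : ℝ) - n * (1 - Real.exp (-c))) / √(n : ℝ)) : ℝ)
          * Complex.I) := by
  have hs0 : 0 < √(n : ℝ) := Real.sqrt_pos.2 (by exact_mod_cast hn)
  have hs0' : (√(n : ℝ) : ℂ) ≠ 0 := by exact_mod_cast hs0.ne'
  have hs : (√(n : ℝ) : ℂ) ^ 2 = n := by
    rw [← Complex.ofReal_pow, Real.sq_sqrt (Nat.cast_nonneg n)]; simp
  set r := ⌊c * (n : ℝ)⌋₊ with hr
  set z := Complex.exp ((θ / √(n : ℝ) : ℝ) * Complex.I) with hz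
  have h1 : ∫ u, Gf c θ n u = ((Real.exp (-c) : ℂ) ^ n *
      Complex.exp (-(√(n : ℝ) * (1 - Real.exp (-c)) * θ * Complex.I))) *
      ∫ u in (-(Real.pi * √(n : ℝ)))..(Real.pi * √(n : ℝ)),
        (fun φ : ℝ => Psi c z φ ^ n * Complex.exp (-(r * φ * Complex.I))) (u / √(n : ℝ)) := by
    unfold Gf
    rw [integral_indicator measurableSet_Ioc, ← intervalIntegral.integral_of_le
      (by nlinarith [Real.pi_pos]), ← intervalIntegral.integral_const_mul]
    refine intervalIntegral.integral_congr fun u _ => ?_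
    simp only [mul_pow]
    ring
  rw [h1, intervalIntegral.integral_comp_div
    (fun φ : ℝ => Psi c z φ ^ n * Complex.exp (-(r * φ * Complex.I))) hs0.ne', neg_div, mul_div_cancel_right₀ _ hs0.ne',
    integral_Psi, Complex.real_smul]
  have h2 : ∀ s : Fin r → Fin n, Complex.exp
      ((θ * (((distinctCount n r s : ℝ) - n * (1 - Real.exp (-c))) / √(n : ℝ)) : ℝ) * Complex.I)
      = Complex.exp (-(√(n : ℝ) * (1 - Real.exp (-c)) * θ * Complex.I)) *
        z ^ distinctCount n r s := by
    intro s
    rw [hz, ← Complex.exp_nat_mul, ← Complex.exp_add]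
    congr 1
    push_cast
    field_simp
    rw [← hs]
    ring
  rw [Finset.sum_congr rfl fun s _ => h2 s, ← Finset.mul_sum]
  ring

lemma gauss_limit (c : ℝ) (hc : 0 < c) (θ : ℝ) :
    (∫ u, Complex.exp ((-Qf c θ u : ℝ) / 2)) =
      Complex.exp ((-(θ ^ 2 * (Real.exp (-c) - (1 + c) * Real.exp (-2 * c))) / 2 : ℝ)) *
        ((√(Real.pi / (c / 2)) : ℝ) : ℂ) := by
  have he : Real.exp (-2 * c) = Real.exp (-c) ^ 2 := by
    rw [← Real.exp_nat_mul]; congr 1; push_cast; ring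
  have h : ∀ u : ℝ, Complex.exp ((-Qf c θ u : ℝ) / 2) =
      ((Real.exp (-(θ ^ 2 * (Real.exp (-c) - (1 + c) * Real.exp (-2 * c))) / 2) *
        Real.exp (-(c / 2) * (u + θ * Real.exp (-c)) ^ 2) : ℝ) : ℂ) := by
    intro u
    rw [← Real.exp_add, he]
    push_cast
    congr 1
    rw [Qf]
    push_cast
    ring
  simp_rw [h]
  rw [integral_complex_ofReal, integral_const_mul,
    integral_add_right_eq_self (fun u : ℝ => Real.exp (-(c / 2) * u ^ 2)), integral_gaussian]
  push_cast
  rfl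

lemma unifExpect_charFun_tendsto (c : ℝ) (hc : 0 < c) (θ : ℝ) :
    Tendsto (fun n : ℕ => (∑ s : Fin ⌊c * (n : ℝ)⌋₊ → Fin n, Complex.exp
        ((θ * (((distinctCount n ⌊c * (n : ℝ)⌋₊ s : ℝ) - n * (1 - Real.exp (-c))) / √(n : ℝ)) : ℝ)
          * Complex.I)) / (Fintype.card (Fin ⌊c * (n : ℝ)⌋₊ → Fin n) : ℂ)) atTop
      (𝓝 (Complex.exp ((-(θ ^ 2 * (Real.exp (-c) - (1 + c) * Real.exp (-2 * c))) / 2 : ℝ)))) := by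
  have hne : ((√(Real.pi / (c / 2)) : ℝ) : ℂ) ≠ 0 := by
    have := Real.pi_pos
    have : 0 < √(Real.pi / (c / 2)) := Real.sqrt_pos.2 (by positivity)
    exact_mod_cast this.ne'
  have h0 := Gf_integral_tendsto c hc 0
  have h1 := Gf_integral_tendsto c hc θ
  rw [gauss_limit c hc] at h0 h1
  have h2 := h1.div h0 (by simpa using hne)
  have e0 : Complex.exp ((-((0 : ℝ) ^ 2 * (Real.exp (-c) - (1 + c) * Real.exp (-2 * c))) / 2 : ℝ))
      = 1 := by simp
  rw [e0, one_mul, mul_div_cancel_right₀ _ hne] at h2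
  refine h2.congr' ?_
  filter_upwards [eventually_gt_atTop 0] with n hn
  have hs0 : 0 < √(n : ℝ) := Real.sqrt_pos.2 (by exact_mod_cast hn)
  simp only [Pi.div_apply]
  rw [Gf_integral c θ n hn, Gf_integral c 0 n hn, mul_div_mul_left]
  · congr 1
    simp
  · have a1 : (√(n : ℝ) : ℂ) ≠ 0 := by exact_mod_cast hs0.ne'
    have a2 : (Real.exp (-c) : ℂ) ≠ 0 := by exact_mod_cast (Real.exp_pos _).ne'
    have a3 : (Real.pi : ℂ) ≠ 0 := by exact_mod_cast Real.pi_ne_zero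
    have a4 : (c : ℂ) ≠ 0 := by exact_mod_cast hc.ne'
    have a5 : ((⌊c * (n : ℝ)⌋₊).factorial : ℂ) ≠ 0 := by exact_mod_cast Nat.factorial_ne_zero _
    exact mul_ne_zero (mul_ne_zero a1 (pow_ne_zero _ a2))
      (mul_ne_zero (mul_ne_zero two_ne_zero a3) (div_ne_zero (pow_ne_zero _ a4) a5))

/-- Uniform law pushed forward by `X`. -/
noncomputable def unifLaw {α : Type*} [Fintype α] (X : α → ℝ) : Measure ℝ :=
  ∑ s : α, (ENNReal.ofReal (1 / (Fintype.card α : ℝ))) • Measure.dirac (X s)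

lemma unifLaw_prob {α : Type*} [Fintype α] [Nonempty α] (X : α → ℝ) :
    IsProbabilityMeasure (unifLaw X) := by
  constructor
  have h : (0 : ℝ) < Fintype.card α := by exact_mod_cast Fintype.card_pos
  simp only [unifLaw, Measure.coe_finsetSum, Finset.sum_apply, Measure.smul_apply,
    measure_univ, smul_eq_mul, mul_one, Finset.sum_const, Finset.card_univ, nsmul_eq_mul]
  rw [← ENNReal.ofReal_natCast, ← ENNReal.ofReal_mul h.le, mul_one_div_cancel h.ne']
  simp

lemma unifLaw_integral {α : Type*} [Fintype α] {E : Type*} [NormedAddCommGroup E]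
    [NormedSpace ℝ E] [CompleteSpace E] (X : α → ℝ) (f : ℝ → E) :
    ∫ x, f x ∂(unifLaw X) = (1 / (Fintype.card α : ℝ)) • ∑ s, f (X s) := by
  rw [unifLaw, integral_finsetSum_measure, Finset.smul_sum]
  · refine Finset.sum_congr rfl fun s _ => ?_
    rw [integral_smul_measure, integral_dirac, ENNReal.toReal_ofReal (by positivity)]
  · intro s _
    refine Integrable.smul_measure ?_ ENNReal.ofReal_ne_top
    exact integrable_dirac (by simp)

/-- **Proposition (occupancy CLT).** For `c > 0`, the number of distinct values among
`⌊cn⌋` i.i.d. uniform samples from `[n]`, centered by `n(1 - e⁻ᶜ)` and scaled by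
`√(n(e⁻ᶜ - (1+c)e⁻²ᶜ))`, converges in distribution (tested against every bounded
continuous function) to a standard normal. -/
theorem occupancy_clt (c : ℝ) (hc : 0 < c) :
    ∀ g : BoundedContinuousFunction ℝ ℝ,
      Tendsto
        (fun n : ℕ =>
          unifExpect (fun s : Fin ⌊c * (n : ℝ)⌋₊ → Fin n =>
            g (((distinctCount n ⌊c * (n : ℝ)⌋₊ s : ℝ) - (n : ℝ) * (1 - Real.exp (-c))) /
              Real.sqrt ((n : ℝ) * (Real.exp (-c) - (1 + c) * Real.exp (-2 * c))))))
        atTop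
        (𝓝 (∫ x, g x ∂(gaussianReal 0 1))) := by
  intro g
  set v : ℝ := Real.exp (-c) - (1 + c) * Real.exp (-2 * c) with hv
  have hvpos : 0 < v := by
    have h1 : 1 + c < Real.exp c := by
      have := Real.add_one_lt_exp hc.ne'; linarith
    have h2 : Real.exp (-c) = Real.exp c * Real.exp (-2 * c) := by
      rw [← Real.exp_add]; congr 1; ring
    rw [hv, h2, ← sub_mul]
    exact mul_pos (by linarith) (Real.exp_pos _)
  have hsv : 0 < √v := Real.sqrt_pos.2 hvpos
  let X : (n : ℕ) → (Fin ⌊c * (n : ℝ)⌋₊ → Fin n) → ℝ := fun n s =>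
    ((distinctCount n ⌊c * (n : ℝ)⌋₊ s : ℝ) - (n : ℝ) * (1 - Real.exp (-c))) / √((n : ℝ) * v)
  haveI : ∀ n : ℕ, IsProbabilityMeasure (unifLaw (X (n + 1))) := fun n => unifLaw_prob _
  let μ : ℕ → ProbabilityMeasure ℝ := fun n => ⟨unifLaw (X (n + 1)), inferInstance⟩
  let μ₀ : ProbabilityMeasure ℝ := ⟨gaussianReal 0 1, inferInstance⟩
  have key : Tendsto μ atTop (𝓝 μ₀) := by
    apply ProbabilityMeasure.tendsto_of_tendsto_charFun
    intro t
    have h := (unifExpect_charFun_tendsto c hc (t / √v)).comp (tendsto_add_atTop_nat 1)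
    have e : charFun (μ₀ : Measure ℝ) t =
        Complex.exp ((-((t / √v) ^ 2 * v) / 2 : ℝ)) := by
      change charFun (gaussianReal 0 1) t = _
      rw [charFun_gaussianReal, div_pow, Real.sq_sqrt hvpos.le, div_mul_cancel₀ _ hvpos.ne']
      congr 1
      push_cast
      simp
      ring
    rw [e]
    refine h.congr fun n => ?_
    change _ = charFun (unifLaw (X (n + 1))) t
    rw [charFun_apply_real, unifLaw_integral, Complex.real_smul]
    simp only [Function.comp]
    rw [div_eq_inv_mul]
    congr 1
    · push_cast; simp
    · refine Finset.sum_congr rfl fun s _ => ?_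
      congr 1
      simp only [X]
      rw [Real.sqrt_mul (Nat.cast_nonneg _), ← Complex.ofReal_mul]
      congr 2
      ring
  rw [ProbabilityMeasure.tendsto_iff_forall_integral_tendsto] at key
  rw [← tendsto_add_atTop_iff_nat 1]
  refine (key g).congr fun n => ?_
  change ∫ x, g x ∂(unifLaw (X (n + 1))) = _
  rw [unifLaw_integral, unifExpect, smul_eq_mul, one_div, ← div_eq_inv_mul]
end
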